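/- Let S₁ and S₂ be closed surfaces equipped with length metrics and let X be a metric wedge sum of S₁ and S₂ (gluing a point p₁ ∈ S₁ to a point p₂ ∈ S₂, with the quotient length metric). Then X is the Gromov-Hausdorff limit of a sequence of length spaces each homeomorphic to a connected sum S₁ # S₂. -/

import Mathlib

open Metric Set Filter GromovHausdorff

/-- Length of a path, as the total variation of the parametrization. -/
noncomputable def pathLength {X : Type} [MetricSpace X] {x y : X} (γ : Path x y) : ENNReal :=
  eVariationOn γ Set.univ

/-- A length space: the distance between two points is the infimum of lengths of
paths joining them. -/
def IsLengthSpace (X : Type) [MetricSpace X] : Prop :=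
  ∀ x y : X, edist x y = ⨅ γ : Path x y, pathLength γ

/-- `Z` is a connected sum of `S₁` and `S₂`: it decomposes into two closed pieces
glued along a common boundary circle, the pieces being homeomorphic to `S₁`, resp.
`S₂`, with an open disc removed. -/
def IsConnectedSumOf (Z S₁ S₂ : Type) [TopologicalSpace Z] [TopologicalSpace S₁]
    [TopologicalSpace S₂] : Prop :=
  ∃ (A B : Set Z) (D₁ : Set S₁) (D₂ : Set S₂),
    IsClosed A ∧ IsClosed B ∧ A ∪ B = Set.univ ∧ A ∩ B = frontier A ∧
    frontier A = frontier B ∧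
    Nonempty (↥(A ∩ B) ≃ₜ AddCircle (1 : ℝ)) ∧
    IsOpen D₁ ∧ IsOpen D₂ ∧
    Nonempty (↥D₁ ≃ₜ Metric.ball (0 : EuclideanSpace ℝ (Fin 2)) 1) ∧
    Nonempty (↥D₂ ≃ₜ Metric.ball (0 : EuclideanSpace ℝ (Fin 2)) 1) ∧
    Nonempty (↥A ≃ₜ ↥(D₁ᶜ)) ∧ Nonempty (↥B ≃ₜ ↥(D₂ᶜ))

/-!
Remove a small disc around `p₁` from the first summand of `X` and one around `p₂` from the second.
The remaining pieces are placed in `C(X, ℝ) × ℝ × ℂ` by the Kuratowski embedding of `X`, at the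
heights `δ` and `-δ`, and a circle moving through the heights in between connects their rims. The
point of this tube at height `s` and angle `u` has the coordinate
`x ↦ ⨅ b v, dist x (rim b v) + ω |s - pole b| (dist u v)` in `C(X, ℝ)`, where `ω t` is a modulus of
continuity of the rims, raised to at least `t`. The rims need not be rectifiable, but below the ends
of the tube `ω t` is Lipschitz, so that a short path between two nearby points of the tube first
leaves the rim and then turns. As `X` is a length space and the tube has diameter `O(δ)`, the inner
metric of the union is compact and differs from the metric of `X` by `O(δ)`, while topologically a
piece with half of the tube is the surface without a smaller disc.
-/

open scoped Topology ENNReal NNReal unitInterval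

/-! ### Paths of controlled length -/

section LengthJoinedIn

variable {M N : Type*} [PseudoEMetricSpace M] [PseudoEMetricSpace N]

/-- The points `x` and `y` are the ends of a path in `s` of length at most `ℓ`. The bound is a
nonnegative real number, so that such bounds can be added as real numbers. -/
def LengthJoinedIn (s : Set M) (ℓ : ℝ) (x y : M) : Prop :=
  0 ≤ ℓ ∧ ∃ γ : Path x y, (∀ t, γ t ∈ s) ∧ eVariationOn γ univ ≤ ENNReal.ofReal ℓ

namespace LengthJoinedIn

variable {s s' : Set M} {ℓ ℓ' : ℝ} {x y z : M}

theorem refl (hx : x ∈ s) : LengthJoinedIn s 0 x x :=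
  ⟨le_rfl, Path.refl x, fun _ => hx, (eVariationOn.constant_on (by simp)).trans_le zero_le⟩

theorem mono (h : LengthJoinedIn s ℓ x y) (hs : s ⊆ s') (hℓ : ℓ ≤ ℓ') :
    LengthJoinedIn s' ℓ' x y :=
  let ⟨h0, γ, hγ, hlen⟩ := h
  ⟨h0.trans hℓ, γ, fun t => hs (hγ t), hlen.trans (ENNReal.ofReal_le_ofReal hℓ)⟩

theorem mono_set (h : LengthJoinedIn s ℓ x y) (hs : s ⊆ s') : LengthJoinedIn s' ℓ x y :=
  h.mono hs le_rfl

theorem mono_length (h : LengthJoinedIn s ℓ x y) (hℓ : ℓ ≤ ℓ') : LengthJoinedIn s ℓ' x y :=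
  h.mono Subset.rfl hℓ

theorem symm (h : LengthJoinedIn s ℓ x y) : LengthJoinedIn s ℓ y x := by
  obtain ⟨h0, γ, hγ, hlen⟩ := h
  exact ⟨h0, γ.symm, fun t => hγ _, (eVariationOn.comp_le_of_antitoneOn γ unitInterval.symm
    (fun _ _ _ _ hab => unitInterval.symm_le_symm.2 hab) fun _ _ => mem_univ _).trans hlen⟩

theorem edist_le (h : LengthJoinedIn s ℓ x y) : edist x y ≤ ENNReal.ofReal ℓ := by
  obtain ⟨-, γ, -, hlen⟩ := h
  simpa using (eVariationOn.edist_le γ (mem_univ (0 : I)) (mem_univ (1 : I))).trans hlen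

theorem dist_le {P : Type*} [PseudoMetricSpace P] {s : Set P} {x y : P}
    (h : LengthJoinedIn s ℓ x y) : dist x y ≤ ℓ := by
  simpa only [edist_dist, ENNReal.ofReal_le_ofReal_iff h.1] using h.edist_le

theorem right_mem (h : LengthJoinedIn s ℓ x y) : y ∈ s := by
  obtain ⟨-, γ, hγ, -⟩ := h
  simpa using hγ 1

theorem of_subpath (γ : Path x y) {a b : I} (hab : a ≤ b) (h0 : 0 ≤ ℓ)
    (hγ : eVariationOn γ (Icc a b) ≤ ENNReal.ofReal ℓ) :
    LengthJoinedIn (γ '' Icc a b) ℓ (γ a) (γ b) := by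
  refine ⟨h0, γ.subpath a b, fun t => Path.range_subpath_of_le γ a b hab ▸ mem_range_self t,
    (eVariationOn.comp_le_of_monotoneOn γ (Icc.convexComb a b) ?_ fun t _ => ?_).trans hγ⟩
  · intro s _ t _ hst
    rw [← Subtype.coe_le_coe] at hst hab ⊢
    simp only [Icc.coe_convexComb]
    nlinarith
  · exact uIcc_of_le hab ▸ Path.range_subpathAux a b ▸ mem_range_self t

theorem trans (h : LengthJoinedIn s ℓ x y) (h' : LengthJoinedIn s ℓ' y z) :
    LengthJoinedIn s (ℓ + ℓ') x z := by
  obtain ⟨h0, γ, hγ, hlen⟩ := h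
  obtain ⟨h0', γ', hγ', hlen'⟩ := h'
  let c : I := ⟨1 / 2, by norm_num, by norm_num⟩
  have hfst : EqOn (γ.trans γ') (γ ∘ fun t : I => projIcc (0 : ℝ) 1 zero_le_one (2 * t)) (Iic c) :=
    fun t ht => by
      rw [Path.trans_apply, dif_pos (show (t : ℝ) ≤ 1 / 2 from ht), Function.comp_apply,
        projIcc_of_mem]
  have hsnd : EqOn (γ.trans γ') (γ' ∘ fun t : I => projIcc (0 : ℝ) 1 zero_le_one (2 * t - 1))
      (Ici c) := fun t ht => by
    obtain ht | ht : t = c ∨ c < t := (eq_or_lt_of_le (mem_Ici.1 ht)).imp_left Eq.symm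
    · rw [ht, hfst self_mem_Iic]
      simp [c]
    · rw [Path.trans_apply, dif_neg (not_le.2 (show 1 / 2 < (t : ℝ) from ht)),
        Function.comp_apply, projIcc_of_mem]
  refine ⟨add_nonneg h0 h0', γ.trans γ', fun t => ?_, ?_⟩
  · rw [Path.trans_apply]
    split_ifs
    exacts [hγ _, hγ' _]
  rw [ENNReal.ofReal_add h0 h0', ← Iic_union_Ici (a := c),
    eVariationOn.union _ isGreatest_Iic isLeast_Ici, eVariationOn.eq_of_eqOn hfst,
    eVariationOn.eq_of_eqOn hsnd]
  refine add_le_add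
    ((eVariationOn.comp_le_of_monotoneOn _ _ ?_ fun _ _ => mem_univ _).trans hlen)
    ((eVariationOn.comp_le_of_monotoneOn _ _ ?_ fun _ _ => mem_univ _).trans hlen')
  · exact fun a _ b _ (hab : (a : ℝ) ≤ b) => monotone_projIcc _ (by linarith)
  · exact fun a _ b _ (hab : (a : ℝ) ≤ b) => monotone_projIcc _ (by linarith)

theorem image {f : M → N} {K : ℝ≥0} (h : LengthJoinedIn s ℓ x y) (hf : LipschitzOnWith K f s) :
    LengthJoinedIn (f '' s) (K * ℓ) (f x) (f y) := by
  obtain ⟨h0, γ, hγ, hlen⟩ := h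
  refine ⟨by positivity, γ.map' (hf.continuousOn.mono (range_subset_iff.2 hγ)),
    fun t => ⟨_, hγ t, rfl⟩, (hf.comp_eVariationOn_le fun t _ => hγ t).trans ?_⟩
  rw [ENNReal.ofReal_mul (NNReal.coe_nonneg K), ENNReal.ofReal_coe_nnreal]
  gcongr

theorem uIcc (a b : ℝ) : LengthJoinedIn (uIcc a b) |b - a| a b := by
  wlog hab : a ≤ b generalizing a b
  · rw [uIcc_comm, abs_sub_comm]
    exact (this b a (le_of_not_ge hab)).symm
  have hmono : Monotone (Path.segment a b) := fun t t' htt' => by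
    simp only [Path.segment_apply, AffineMap.lineMap_apply_ring']
    have : (t : ℝ) ≤ t' := htt'
    nlinarith
  refine ⟨abs_nonneg _, Path.segment a b, fun t => ?_, ?_⟩
  · exact segment_eq_uIcc a b ▸ Path.range_segment a b ▸ mem_range_self t
  · have hvar := (hmono.monotoneOn univ).eVariationOn_eq (mem_univ 0) (mem_univ 1)
    rw [univ_inter, (eq_univ_of_forall fun t => ⟨t.2.1, t.2.2⟩ : Icc (0 : I) 1 = univ)] at hvar
    rw [hvar, Path.source, Path.target, abs_of_nonneg (sub_nonneg.2 hab)]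

theorem of_lipschitzOnWith {f : ℝ → M} {K : ℝ≥0} {a b : ℝ}
    (hf : LipschitzOnWith K f (Set.uIcc a b)) (hs : MapsTo f (Set.uIcc a b) s) :
    LengthJoinedIn s (K * |b - a|) (f a) (f b) :=
  ((uIcc a b).image hf).mono_set hs.image_subset

end LengthJoinedIn

theorem eVariationOn_le_of_edist_le {α : Type*} [LinearOrder α] {f : α → M} {g : α → N}
    (h : ∀ a b, a ≤ b → edist (f a) (f b) ≤ eVariationOn g (Icc a b)) :
    eVariationOn f univ ≤ eVariationOn g univ := by
  have hsum : ∀ (u : ℕ → α) (n : ℕ), Monotone u →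
      ∑ i ∈ Finset.range n, eVariationOn g (Icc (u i) (u (i + 1))) ≤
        eVariationOn g (Icc (u 0) (u n)) := by
    intro u n hu
    induction n with
    | zero => simp
    | succ n ih =>
      have hadd := eVariationOn.Icc_add_Icc g (s := univ) (hu n.zero_le) (hu n.le_succ) (mem_univ _)
      simp only [univ_inter] at hadd
      rw [Finset.sum_range_succ, ← hadd]
      gcongr
  refine iSup_le fun p => ?_
  calc ∑ i ∈ Finset.range p.1, edist (f (p.2.1 (i + 1))) (f (p.2.1 i))
      ≤ ∑ i ∈ Finset.range p.1, eVariationOn g (Icc (p.2.1 i) (p.2.1 (i + 1))) :=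
        Finset.sum_le_sum fun i _ => edist_comm (f _) _ ▸ h _ _ (p.2.2.1 i.le_succ)
    _ ≤ eVariationOn g (Icc (p.2.1 0) (p.2.1 p.1)) := hsum _ _ p.2.2.1
    _ ≤ eVariationOn g univ := eVariationOn.mono _ (subset_univ _)

end LengthJoinedIn

/-! ### Length metrics -/

section LengthMetric

theorem isLengthSpace_iff {X : Type} [MetricSpace X] :
    IsLengthSpace X ↔ ∀ (x y : X) (r : ℝ), dist x y < r → LengthJoinedIn univ r x y := by
  refine ⟨fun h x y r hr => ?_, fun h x y => ?_⟩
  · have h0 : 0 < r := dist_nonneg.trans_lt hr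
    have hlt : edist x y < ENNReal.ofReal r := by
      rwa [edist_dist, ENNReal.ofReal_lt_ofReal_iff h0]
    rw [h x y, iInf_lt_iff] at hlt
    obtain ⟨γ, hγ⟩ := hlt
    exact ⟨h0.le, γ, fun _ => mem_univ _, hγ.le⟩
  · refine le_antisymm (le_iInf fun γ => ?_) (le_of_forall_gt fun c hc => ?_)
    · simpa [pathLength] using eVariationOn.edist_le γ (mem_univ (0 : I)) (mem_univ (1 : I))
    · obtain ⟨r, hxr, hrc⟩ := ENNReal.lt_iff_exists_nnreal_btwn.1 hc
      obtain ⟨-, γ, -, hγ⟩ := h x y r (by rwa [edist_nndist, ENNReal.coe_lt_coe] at hxr)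
      exact (iInf_le _ γ).trans_lt (hγ.trans_lt (by rwa [ENNReal.ofReal_coe_nnreal]))

variable {M : Type*} [MetricSpace M] {s : Set M} {x y z : M} {ℓ : ℝ}

/-- The infimum of the lengths of the paths in `s` between two points, with the junk value `0` when
there is no such path of finite length. -/
noncomputable def innerDist (s : Set M) (x y : M) : ℝ :=
  sInf {ℓ | LengthJoinedIn s ℓ x y}

theorem LengthJoinedIn.innerDist_le (h : LengthJoinedIn s ℓ x y) : innerDist s x y ≤ ℓ :=
  csInf_le ⟨0, fun _ h' => h'.1⟩ h

theorem le_innerDist {c : ℝ} (h : ∃ ℓ, LengthJoinedIn s ℓ x y)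
    (hc : ∀ ℓ, LengthJoinedIn s ℓ x y → c ≤ ℓ) : c ≤ innerDist s x y :=
  le_csInf h hc

theorem LengthJoinedIn.of_innerDist_lt (h : ∃ ℓ, LengthJoinedIn s ℓ x y)
    (hℓ : innerDist s x y < ℓ) : LengthJoinedIn s ℓ x y :=
  let ⟨_, hr, hrℓ⟩ := exists_lt_of_csInf_lt h hℓ
  LengthJoinedIn.mono_length hr hrℓ.le

theorem innerDist_comm (s : Set M) (x y : M) : innerDist s x y = innerDist s y x :=
  congrArg sInf (ext fun _ => ⟨LengthJoinedIn.symm, LengthJoinedIn.symm⟩)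

theorem innerDist_triangle (hxy : ∃ ℓ, LengthJoinedIn s ℓ x y) (hyz : ∃ ℓ, LengthJoinedIn s ℓ y z) :
    innerDist s x z ≤ innerDist s x y + innerDist s y z := by
  refine le_of_forall_pos_le_add fun η hη => ?_
  have h := (LengthJoinedIn.of_innerDist_lt hxy (lt_add_of_pos_right _ (half_pos hη))).trans
    (LengthJoinedIn.of_innerDist_lt hyz (lt_add_of_pos_right _ (half_pos hη)))
  linarith [h.innerDist_le]

theorem innerDist_self (hx : x ∈ s) : innerDist s x x = 0 :=
  le_antisymm (LengthJoinedIn.refl hx).innerDist_le (le_innerDist ⟨0, .refl hx⟩ fun _ h => h.1)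

theorem isLengthSpace_of_dist_eq_innerDist {Z : Type} [MetricSpace Z] {j : Z → M}
    (hj : Topology.IsEmbedding j) (hjoin : ∀ x y, ∃ ℓ, LengthJoinedIn (range j) ℓ (j x) (j y))
    (hdist : ∀ x y, dist x y = innerDist (range j) (j x) (j y)) : IsLengthSpace Z := by
  refine isLengthSpace_iff.2 fun x y r hr => ?_
  obtain ⟨h0, γ, hγ, hlen⟩ := LengthJoinedIn.of_innerDist_lt (hjoin x y) (hdist x y ▸ hr)
  choose g hg using hγ
  have hgc : Continuous g := hj.continuous_iff.2 (γ.continuous.congr fun t => (hg t).symm)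
  let γ' : Path x y := ⟨⟨g, hgc⟩, hj.injective ((hg 0).trans γ.source),
    hj.injective ((hg 1).trans γ.target)⟩
  refine ⟨h0, γ', fun _ => mem_univ _, (eVariationOn_le_of_edist_le fun a b hab => ?_).trans hlen⟩
  have hfin : eVariationOn γ (Icc a b) ≠ ∞ :=
    ((eVariationOn.mono γ (subset_univ _)).trans hlen).trans_lt ENNReal.ofReal_lt_top |>.ne
  have hsub : γ '' Icc a b ⊆ range j := image_subset_iff.2 fun t _ => ⟨g t, hg t⟩
  have harc := (LengthJoinedIn.of_subpath γ hab ENNReal.toReal_nonneg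
    (ENNReal.ofReal_toReal hfin).ge).mono_set hsub
  rw [← hg a, ← hg b] at harc
  rw [edist_dist, ENNReal.ofReal_le_iff_le_toReal hfin, hdist]
  exact harc.innerDist_le

theorem exists_innerDist_metric {Z : Type*} {j : Z → M} (hj : Function.Injective j)
    (hjoin : ∀ x y, ∃ ℓ, LengthJoinedIn (range j) ℓ (j x) (j y))
    (hloc : ∀ x, ∀ η > 0, ∀ᶠ z in 𝓝[range j] (j x), LengthJoinedIn (range j) η (j x) z) :
    ∃ _ : MetricSpace Z, Topology.IsEmbedding j ∧
      ∀ x y, dist x y = innerDist (range j) (j x) (j y) := by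
  let _ : TopologicalSpace Z := .induced j inferInstance
  have hemb : Topology.IsEmbedding j := ⟨⟨rfl⟩, hj⟩
  have hle : ∀ x y, dist (j x) (j y) ≤ innerDist (range j) (j x) (j y) := fun x y =>
    le_innerDist (hjoin x y) fun _ h => h.dist_le
  have htop : ∀ U : Set Z, IsOpen U ↔
      ∀ x ∈ U, ∃ r > 0, ∀ y, innerDist (range j) (j x) (j y) < r → y ∈ U := by
    refine fun U => ⟨fun hU x hx => ?_, fun h => isOpen_iff_mem_nhds.2 fun x hx => ?_⟩
    · have hU' := hU.mem_nhds hx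
      rw [hemb.nhds_eq_comap, Metric.nhds_basis_ball.comap j |>.mem_iff] at hU'
      obtain ⟨r, hr, hsub⟩ := hU'
      exact ⟨r, hr, fun y hy => hsub (mem_ball'.2 ((hle x y).trans_lt hy))⟩
    · obtain ⟨r, hr, hsub⟩ := h x hx
      have hnear := hloc x (r / 2) (half_pos hr)
      rw [← hemb.map_nhds_eq, eventually_map] at hnear
      filter_upwards [hnear] with y hy
      exact hsub y (hy.innerDist_le.trans_lt (half_lt_self hr))
  exact ⟨.ofDistTopology (fun x y => innerDist (range j) (j x) (j y))
    (fun x => innerDist_self (mem_range_self x)) (fun x y => innerDist_comm _ _ _)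
    (fun x y z => innerDist_triangle (hjoin x y) (hjoin y z)) htop
    fun x y h => hj (dist_le_zero.1 ((hle x y).trans h.le)), hemb, fun _ _ => rfl⟩

theorem exists_isLengthSpace_innerDist {M : Type} [MetricSpace M] {s : Set M}
    (hjoin : ∀ x ∈ s, ∀ y ∈ s, ∃ ℓ, LengthJoinedIn s ℓ x y)
    (hloc : ∀ x ∈ s, ∀ η > 0, ∀ᶠ z in 𝓝[s] x, LengthJoinedIn s η x z) :
    ∃ (Z : Type) (_ : MetricSpace Z) (j : Z → M), Topology.IsEmbedding j ∧ range j = s ∧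
      IsLengthSpace Z ∧ ∀ x y, dist x y = innerDist s (j x) (j y) := by
  have hs : range (Subtype.val : s → M) = s := Subtype.range_coe
  have hjoin' : ∀ x y : s, ∃ ℓ, LengthJoinedIn (range (Subtype.val : s → M)) ℓ (x : M) y :=
    fun x y => hs.symm ▸ hjoin x x.2 y y.2
  obtain ⟨m, hemb, hdist⟩ := exists_innerDist_metric Subtype.val_injective hjoin'
    fun x η hη => hs.symm ▸ hloc x x.2 η hη
  exact ⟨s, m, Subtype.val, hemb, hs, isLengthSpace_of_dist_eq_innerDist hemb hjoin' hdist,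
    fun x y => (hdist x y).trans (by rw [hs])⟩

end LengthMetric

/-! ### Length spaces -/

section LengthSpace

variable {M : Type*} [MetricSpace M] {s A U : Set M} {x y : M} {ℓ : ℝ}

theorem exists_lengthJoinedIn_split (γ : Path x y) (h0 : 0 ≤ ℓ)
    (hγ : eVariationOn γ univ ≤ ENNReal.ofReal ℓ) (t : I) :
    ∃ ℓ₁ ℓ₂, ℓ₁ + ℓ₂ = ℓ ∧ LengthJoinedIn (γ '' Icc 0 t) ℓ₁ x (γ t) ∧
      LengthJoinedIn (range γ) ℓ₂ (γ t) y := by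
  have hadd := eVariationOn.Icc_add_Icc γ (s := univ) (unitInterval.nonneg' (t := t))
    (unitInterval.le_one' (t := t)) (mem_univ t)
  simp only [univ_inter] at hadd
  have hle : eVariationOn γ (Icc 0 t) + eVariationOn γ (Icc t 1) ≤ ENNReal.ofReal ℓ :=
    hadd.trans_le ((eVariationOn.mono _ (subset_univ _)).trans hγ)
  have hfin : eVariationOn γ (Icc 0 t) ≠ ∞ :=
    ((le_self_add.trans hle).trans_lt ENNReal.ofReal_lt_top).ne
  set ℓ₁ := (eVariationOn γ (Icc 0 t)).toReal
  have h₁ : eVariationOn γ (Icc 0 t) = ENNReal.ofReal ℓ₁ := (ENNReal.ofReal_toReal hfin).symm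
  have hℓ : ℓ₁ ≤ ℓ := ENNReal.toReal_le_of_le_ofReal h0 (le_self_add.trans hle)
  have h₂ : eVariationOn γ (Icc t 1) ≤ ENNReal.ofReal (ℓ - ℓ₁) := by
    rw [ENNReal.ofReal_sub _ ENNReal.toReal_nonneg, ← h₁]
    exact ENNReal.le_sub_of_add_le_left hfin hle
  have hfst := LengthJoinedIn.of_subpath γ unitInterval.nonneg' ENNReal.toReal_nonneg h₁.le
  have hsnd := (LengthJoinedIn.of_subpath γ unitInterval.le_one' (sub_nonneg.2 hℓ) h₂).mono_set
    (image_subset_range _ _)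
  exact ⟨ℓ₁, ℓ - ℓ₁, by ring, by simpa using hfst, by simpa using hsnd⟩

/-- The cut is made at the first time when the path is outside of `U`. -/
theorem LengthJoinedIn.exists_cut (h : LengthJoinedIn s ℓ x y) (hA : IsClosed A) (hU : IsOpen U)
    (hUA : U ⊆ A) (hx : x ∈ A) :
    LengthJoinedIn (s ∩ U) ℓ x y ∨ ∃ c ∈ A \ U, ∃ ℓ₁ ℓ₂, ℓ₁ + ℓ₂ = ℓ ∧
      LengthJoinedIn (s ∩ A) ℓ₁ x c ∧ LengthJoinedIn s ℓ₂ c y := by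
  obtain ⟨h0, γ, hγ, hlen⟩ := h
  by_cases hγU : ∀ t, γ t ∈ U
  · exact .inl ⟨h0, γ, fun t => ⟨hγ t, hγU t⟩, hlen⟩
  right
  obtain ⟨t, ht, hmin⟩ := (hU.isClosed_compl.preimage γ.continuous).isCompact.exists_isLeast
    (not_forall.1 hγU)
  have hbefore : MapsTo γ (Iio t) U := fun a ha => by
    by_contra hna
    exact (hmin hna).not_gt ha
  have hIcc : MapsTo γ (Icc 0 t) A := by
    obtain rfl | h0t := eq_or_ne t 0
    · simpa using hx
    · have hcl := hbefore.closure γ.continuous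
      rw [closure_Iio' (a := t) ⟨0, unitInterval.pos_iff_ne_zero.2 h0t⟩] at hcl
      exact fun a ha => hA.closure_subset_iff.2 hUA (hcl ha.2)
  obtain ⟨ℓ₁, ℓ₂, hsum, h₁, h₂⟩ := exists_lengthJoinedIn_split γ h0 hlen t
  refine ⟨γ t, ⟨hIcc (right_mem_Icc.2 unitInterval.nonneg'), ht⟩, ℓ₁, ℓ₂, hsum, h₁.mono_set ?_,
    h₂.mono_set (range_subset_iff.2 hγ)⟩
  exact image_subset_iff.2 fun a ha => ⟨hγ a, hIcc ha⟩

theorem isLengthSpace_wedge {S₁ S₂ X : Type} [MetricSpace S₁] [MetricSpace S₂] [MetricSpace X]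
    (hS₁ : IsLengthSpace S₁) (hS₂ : IsLengthSpace S₂) {p₁ : S₁} {p₂ : S₂}
    {i₁ : S₁ → X} {i₂ : S₂ → X} (h₁ : Isometry i₁) (h₂ : Isometry i₂)
    (hwp : i₁ p₁ = i₂ p₂) (hcover : range i₁ ∪ range i₂ = univ)
    (hcross : ∀ (x : S₁) (y : S₂), dist (i₁ x) (i₂ y) = dist x p₁ + dist p₂ y) :
    IsLengthSpace X := by
  rw [isLengthSpace_iff] at *
  have hmap₁ : ∀ x y r, dist x y < r → LengthJoinedIn univ r (i₁ x) (i₁ y) := fun x y r hr => by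
    simpa using ((hS₁ x y r hr).image h₁.lipschitz.lipschitzOnWith).mono_set (subset_univ _)
  have hmap₂ : ∀ x y r, dist x y < r → LengthJoinedIn univ r (i₂ x) (i₂ y) := fun x y r hr => by
    simpa using ((hS₂ x y r hr).image h₂.lipschitz.lipschitzOnWith).mono_set (subset_univ _)
  have hmixed : ∀ x y r, dist (i₁ x) (i₂ y) < r → LengthJoinedIn univ r (i₁ x) (i₂ y) := by
    intro x y r hr
    rw [hcross] at hr
    obtain ⟨a, ha, har⟩ := exists_between (lt_sub_iff_add_lt.2 hr)
    have hpath := (hmap₁ x p₁ a ha).trans (hwp ▸ hmap₂ p₂ y (r - a) (by linarith))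
    rwa [add_sub_cancel] at hpath
  intro x y r hr
  rcases (hcover ▸ mem_univ x : x ∈ range i₁ ∪ range i₂) with ⟨x, rfl⟩ | ⟨x, rfl⟩ <;>
    rcases (hcover ▸ mem_univ y : y ∈ range i₁ ∪ range i₂) with ⟨y, rfl⟩ | ⟨y, rfl⟩
  · exact hmap₁ x y r (by rwa [h₁.dist_eq] at hr)
  · exact hmixed x y r hr
  · exact (hmixed y x r (by rwa [dist_comm])).symm
  · exact hmap₂ x y r (by rwa [h₂.dist_eq] at hr)

end LengthSpace

/-! ### Arcs on the circle and moduli of continuity -/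

theorem circle_dist_eq (u v : Circle) : dist u v = ‖(u : ℂ) - v‖ := dist_eq_norm (u : ℂ) v

theorem dist_circleExp_mul_le (u : Circle) (a b : ℝ) :
    dist (Circle.exp a * u) (Circle.exp b * u) ≤ |a - b| := by
  have hfactor : ((Circle.exp a * u : Circle) : ℂ) - (Circle.exp b * u : Circle) =
      ((Circle.exp b * u : Circle) : ℂ) * (Complex.exp (Complex.I * (a - b : ℝ)) - 1) := by
    push_cast [Circle.coe_exp]
    rw [mul_sub, mul_one, mul_sub, Complex.exp_sub, mul_comm Complex.I, mul_comm Complex.I]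
    field_simp
  rw [circle_dist_eq, hfactor, norm_mul, Circle.norm_coe, one_mul]
  exact Real.norm_exp_I_mul_ofReal_sub_one_le

theorem LengthJoinedIn.circle (u v : Circle) : LengthJoinedIn univ (2 * dist u v) u v := by
  set θ := Complex.arg (v / u : Circle) with hθ
  have hlip : LipschitzWith 1 fun t : ℝ => Circle.exp t * u :=
    LipschitzWith.of_dist_le_mul fun a b => by
      simpa [Real.dist_eq] using dist_circleExp_mul_le u a b
  have hpath := LengthJoinedIn.of_lipschitzOnWith (s := univ) (a := 0) (b := θ)
    hlip.lipschitzOnWith (mapsTo_univ _ _)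
  have hangle : |θ| ≤ 2 * dist u v := by
    have h := Complex.angle_le_mul_norm_sub (Circle.norm_coe v) (Circle.norm_coe u)
    rw [Complex.angle_eq_abs_arg v.coe_ne_zero u.coe_ne_zero, ← Circle.coe_div, ← hθ] at h
    rw [dist_comm, circle_dist_eq]
    nlinarith [Real.pi_le_four, norm_nonneg ((v : ℂ) - u)]
  rw [Circle.exp_zero, one_mul, hθ, Circle.exp_arg, div_mul_cancel] at hpath
  exact hpath.mono_length (by rwa [NNReal.coe_one, one_mul, sub_zero])

section Modulus

variable {K Y : Type*} [PseudoMetricSpace K] [PseudoMetricSpace Y] {f : K → Y}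
  {e L r r' t t' : ℝ} {u v : K}

/-- The affine function `r ↦ e + L * r` is a modulus of continuity for `f`. -/
structure IsAffineModulus (f : K → Y) (e L : ℝ) : Prop where
  const_nonneg : 0 ≤ e
  slope_nonneg : 0 ≤ L
  dist_le : ∀ u v, dist (f u) (f v) ≤ e + L * dist u v

theorem IsAffineModulus.of_dist_le (h0 : 0 ≤ e) (he : ∀ u v, dist (f u) (f v) ≤ e) :
    IsAffineModulus f e 0 :=
  ⟨h0, le_rfl, fun u v => by simpa using he u v⟩

theorem exists_isAffineModulus [CompactSpace K] (hf : Continuous f) (he : 0 < e) :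
    ∃ L, IsAffineModulus f e L := by
  obtain ⟨d, hd, hfd⟩ := Metric.uniformContinuous_iff.1
    (CompactSpace.uniformContinuous_of_continuous hf) e he
  have hdiam : ∀ u v, dist (f u) (f v) ≤ diam (range f) := fun u v =>
    dist_le_diam_of_mem (isCompact_range hf).isBounded (mem_range_self u) (mem_range_self v)
  refine ⟨diam (range f) / d, he.le, div_nonneg diam_nonneg hd.le, fun u v => ?_⟩
  obtain huv | huv := lt_or_ge (dist u v) d
  · exact (hfd huv).le.trans (le_add_of_nonneg_right (by positivity))
  · refine (hdiam u v).trans (le_add_of_nonneg_of_le he.le ?_)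
    rw [div_mul_eq_mul_div, le_div_iff₀ hd]
    gcongr

/-- The infimum of the affine moduli of continuity of `f`, with their constant terms raised to at
least `t`. At `t = 0` it is a modulus of continuity of `f` which vanishes at `0`, while for `t > 0`
it is Lipschitz in `r`. -/
noncomputable def raisedModulus (f : K → Y) (t r : ℝ) : ℝ :=
  ⨅ p : {p : ℝ × ℝ // IsAffineModulus f p.1 p.2}, max p.1.1 t + p.1.2 * r

theorem raisedModulus_le (h : IsAffineModulus f e L) (hr : 0 ≤ r) :
    raisedModulus f t r ≤ max e t + L * r := by
  refine ciInf_le ⟨0, ?_⟩ (⟨(e, L), h⟩ : {p : ℝ × ℝ // IsAffineModulus f p.1 p.2})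
  rintro _ ⟨p, rfl⟩
  have := p.2.const_nonneg.trans (le_max_left _ t)
  have := p.2.slope_nonneg
  positivity

variable [CompactSpace K]

theorem le_raisedModulus (hf : Continuous f) {c : ℝ}
    (h : ∀ e L, IsAffineModulus f e L → c ≤ max e t + L * r) : c ≤ raisedModulus f t r :=
  have : Nonempty {p : ℝ × ℝ // IsAffineModulus f p.1 p.2} :=
    let ⟨L, hL⟩ := exists_isAffineModulus hf one_pos
    ⟨(1, L), hL⟩
  le_ciInf fun p => h _ _ p.2

theorem dist_le_raisedModulus (hf : Continuous f) :
    dist (f u) (f v) ≤ raisedModulus f t (dist u v) :=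
  le_raisedModulus hf fun _ _ h => (h.dist_le u v).trans (by gcongr; exact le_max_left _ _)

theorem self_le_raisedModulus (hf : Continuous f) (hr : 0 ≤ r) : t ≤ raisedModulus f t r :=
  le_raisedModulus hf fun e _ h =>
    (le_max_right e t).trans (le_add_of_nonneg_right (mul_nonneg h.slope_nonneg hr))

theorem raisedModulus_zero (hf : Continuous f) (ht : 0 ≤ t) : raisedModulus f t 0 = t := by
  refine le_antisymm (le_of_forall_pos_le_add fun e he => ?_) (self_le_raisedModulus hf le_rfl)
  obtain ⟨L, hL⟩ := exists_isAffineModulus hf he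
  have := raisedModulus_le (t := t) hL le_rfl
  linarith [max_le (le_add_of_nonneg_left ht) (le_add_of_nonneg_right he.le : t ≤ t + e)]

theorem raisedModulus_le_add_abs (hf : Continuous f) (hr : 0 ≤ r) :
    raisedModulus f t r ≤ raisedModulus f t' r + |t - t'| := by
  rw [← sub_le_iff_le_add]
  refine le_raisedModulus hf fun e L h => ?_
  have hmax : max e t ≤ max e t' + |t - t'| :=
    max_le ((le_max_left _ _).trans (le_add_of_nonneg_right (abs_nonneg _)))
      (by linarith [le_max_right e t', le_abs_self (t - t')])
  linarith [raisedModulus_le (t := t) h hr]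

theorem abs_raisedModulus_sub_le_of_level (hf : Continuous f) (hr : 0 ≤ r) :
    |raisedModulus f t r - raisedModulus f t' r| ≤ |t - t'| :=
  abs_sub_le_iff.2 ⟨sub_le_iff_le_add'.2 (raisedModulus_le_add_abs hf hr),
    sub_le_iff_le_add'.2 (abs_sub_comm t t' ▸ raisedModulus_le_add_abs hf hr)⟩

theorem raisedModulus_le_add_mul_abs (hf : Continuous f) (h : IsAffineModulus f e L) (het : e ≤ t)
    (hr : 0 ≤ r) (hr' : 0 ≤ r') :
    raisedModulus f t r ≤ raisedModulus f t r' + L * |r - r'| := by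
  have habs := mul_le_mul_of_nonneg_left (le_abs_self (r - r')) h.slope_nonneg
  rw [← sub_le_iff_le_add]
  refine le_raisedModulus hf fun e' L' h' => ?_
  obtain hLL' | hLL' := le_total L L'
  · have := raisedModulus_le (t := t) h hr
    rw [max_eq_right het] at this
    have := mul_le_mul_of_nonneg_right hLL' hr'
    linarith [le_max_right e' t]
  · have := raisedModulus_le (t := t) h' hr
    have := mul_le_mul_of_nonneg_right hLL' (abs_nonneg (r - r'))
    have := mul_le_mul_of_nonneg_left (le_abs_self (r - r')) h'.slope_nonneg
    linarith

theorem abs_raisedModulus_sub_le (hf : Continuous f) (h : IsAffineModulus f e L) (het : e ≤ t)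
    (hr : 0 ≤ r) (hr' : 0 ≤ r') :
    |raisedModulus f t r - raisedModulus f t r'| ≤ L * |r - r'| :=
  abs_sub_le_iff.2 ⟨sub_le_iff_le_add'.2 (raisedModulus_le_add_mul_abs hf h het hr hr'),
    sub_le_iff_le_add'.2 (abs_sub_comm r r' ▸ raisedModulus_le_add_mul_abs hf h het hr' hr)⟩

end Modulus

/-! ### The tube between two bordered pieces -/

/-- A closed subset of `X` whose boundary is contained in a parametrized circle, like the
complement of an open disc in a surface. -/
structure BorderedPiece (X : Type*) [TopologicalSpace X] where
  carrier : Set X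
  rim : Circle → X
  isClosed : IsClosed carrier
  continuous_rim : Continuous rim
  injective_rim : Function.Injective rim
  rim_mem : ∀ u, rim u ∈ carrier
  isOpen_diff : IsOpen (carrier \ range rim)

/-- Two disjoint bordered pieces, indexed by `Bool`, which nearly fill `X` and whose rims are within
`δ` of each other. The pieces are going to be connected by a tube along their rims. -/
structure TubeSite (X : Type*) [MetricSpace X] (δ : ℝ) where
  piece : Bool → BorderedPiece X
  pos : 0 < δ
  eq_of_mem : ∀ {b b' x}, x ∈ (piece b).carrier → x ∈ (piece b').carrier → b = b'
  dist_rim_le : ∀ b b' u v, dist ((piece b).rim u) ((piece b').rim v) ≤ δ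
  exists_near : ∀ x, ∃ b, ∃ y ∈ (piece b).carrier, dist x y ≤ δ

/-- The two ends of the interval `[-δ, δ]`. -/
def pole (δ : ℝ) (b : Bool) : ℝ :=
  if b then δ else -δ

theorem abs_pole {δ : ℝ} (hδ : 0 ≤ δ) (b : Bool) : |pole δ b| = δ := by
  cases b <;> simp [pole, abs_of_nonneg hδ]

theorem pole_mem_Icc {δ : ℝ} (hδ : 0 ≤ δ) (b : Bool) : pole δ b ∈ Icc (-δ) δ :=
  abs_le.1 (abs_pole hδ b).le

/-- The distance to `x`, as a point of the Kuratowski model `C(X, ℝ)`. -/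
def distTo {X : Type*} [PseudoMetricSpace X] (x : X) : C(X, ℝ) :=
  ⟨fun y => dist y x, by fun_prop⟩

theorem isometry_distTo {X : Type*} [PseudoMetricSpace X] [CompactSpace X] :
    Isometry (distTo : X → C(X, ℝ)) := by
  refine Isometry.of_dist_eq fun x y => le_antisymm ?_ ?_
  · refine (ContinuousMap.dist_le dist_nonneg).2 fun z => ?_
    simpa [distTo, Real.dist_eq, dist_comm] using abs_dist_sub_le x y z
  · simpa [distTo, Real.dist_eq] using ContinuousMap.dist_apply_le_dist (f := distTo x)
      (g := distTo y) x

namespace TubeSite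

section Profile

variable {X : Type*} [MetricSpace X] {δ : ℝ} (T : TubeSite X δ)

/-- Both rims, as a single map, with a joint modulus of continuity. -/
def rims (u : Circle) (b : Bool) : X :=
  (T.piece b).rim u

theorem continuous_rims : Continuous T.rims :=
  continuous_pi fun b => (T.piece b).continuous_rim

theorem isAffineModulus_rims : IsAffineModulus T.rims δ 0 :=
  .of_dist_le T.pos.le fun u v => (dist_pi_le_iff T.pos.le).2 fun b => T.dist_rim_le b b u v

/-- The distance which is prescribed between `x` and the point of the tube at height `s` and angle
`u`. -/
noncomputable def profileAt (s : ℝ) (u : Circle) (x : X) : ℝ :=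
  ⨅ p : Bool × Circle,
    dist x ((T.piece p.1).rim p.2) + raisedModulus T.rims |s - pole δ p.1| (dist u p.2)

variable {T} {s s' h L c : ℝ} {u u' v : Circle} {x x' : X}

theorem profileAt_le (b : Bool) (v : Circle) : T.profileAt s u x ≤
    dist x ((T.piece b).rim v) + raisedModulus T.rims |s - pole δ b| (dist u v) := by
  refine ciInf_le ⟨0, ?_⟩ (b, v)
  rintro _ ⟨p, rfl⟩
  have := (abs_nonneg _).trans (self_le_raisedModulus T.continuous_rims
    (t := |s - pole δ p.1|) (dist_nonneg (x := u) (y := p.2)))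
  positivity

theorem profileAt_le_add (h : ∀ b v,
    dist x ((T.piece b).rim v) + raisedModulus T.rims |s - pole δ b| (dist u v) ≤
      dist x' ((T.piece b).rim v) + raisedModulus T.rims |s' - pole δ b| (dist u' v) + c) :
    T.profileAt s u x ≤ T.profileAt s' u' x' + c := by
  rw [← sub_le_iff_le_add]
  exact le_ciInf fun p => sub_le_iff_le_add.2 ((profileAt_le p.1 p.2).trans (h p.1 p.2))

variable (T s u) in
/-- The prescribed distances to the point of the tube at height `s` and angle `u`, as a point of the
Kuratowski model `C(X, ℝ)`. -/
noncomputable def profile : C(X, ℝ) where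
  toFun := T.profileAt s u
  continuous_toFun := (LipschitzWith.of_le_add fun x y => profileAt_le_add fun b v => by
    linarith [dist_triangle x y ((T.piece b).rim v)]).continuous

theorem profile_pole (T : TubeSite X δ) (b : Bool) (u : Circle) :
    T.profile (pole δ b) u = distTo ((T.piece b).rim u) := by
  ext x
  refine le_antisymm ((profileAt_le b u).trans_eq ?_) (le_ciInf fun ⟨b', v⟩ => ?_)
  · rw [sub_self, abs_zero, dist_self, raisedModulus_zero T.continuous_rims le_rfl, add_zero]
    rfl
  · refine (dist_triangle x ((T.piece b').rim v) _).trans (add_le_add_right ?_ _)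
    obtain rfl | hbb' := eq_or_ne b' b
    · rw [dist_comm]
      exact (dist_le_pi_dist (T.rims u) (T.rims v) b').trans
        (dist_le_raisedModulus T.continuous_rims)
    · have hpoles : δ ≤ |pole δ b - pole δ b'| := by
        have := T.pos
        rw [le_abs]
        revert hbb'
        cases b <;> cases b' <;> simp [pole] <;> grind
      exact (T.dist_rim_le b' b v u).trans
        (hpoles.trans (self_le_raisedModulus T.continuous_rims dist_nonneg))

variable [CompactSpace X]

theorem dist_profile_le (hc : 0 ≤ c) (h : ∀ b v,
    |raisedModulus T.rims |s - pole δ b| (dist u v) -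
      raisedModulus T.rims |s' - pole δ b| (dist u' v)| ≤ c) :
    dist (T.profile s u) (T.profile s' u') ≤ c := by
  refine (ContinuousMap.dist_le hc).2 fun x => abs_sub_le_iff.2 ⟨?_, ?_⟩ <;>
  · refine sub_le_iff_le_add'.2 (profileAt_le_add fun b v => ?_)
    linarith [abs_le.1 (h b v)]

theorem dist_profile_le_of_height (T : TubeSite X δ) (s s' : ℝ) (u : Circle) :
    dist (T.profile s u) (T.profile s' u) ≤ |s - s'| := by
  refine dist_profile_le (abs_nonneg _) fun b v => ?_
  have hpole : |(|s - pole δ b| - |s' - pole δ b|)| ≤ |s - s'| := by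
    simpa using abs_abs_sub_abs_le_abs_sub (s - pole δ b) (s' - pole δ b)
  exact (abs_raisedModulus_sub_le_of_level T.continuous_rims dist_nonneg).trans hpole

theorem dist_profile_le_of_angle (hL : IsAffineModulus T.rims (δ - |s|) L) (u v : Circle) :
    dist (T.profile s u) (T.profile s v) ≤ L * dist u v := by
  refine dist_profile_le (mul_nonneg hL.slope_nonneg dist_nonneg) fun b w => ?_
  have hraised : δ - |s| ≤ |s - pole δ b| := by
    rw [abs_sub_comm]
    simpa only [abs_pole T.pos.le] using abs_sub_abs_le_abs_sub (pole δ b) s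
  have hdist := mul_le_mul_of_nonneg_left (abs_dist_sub_le u v w) hL.slope_nonneg
  exact (abs_raisedModulus_sub_le T.continuous_rims hL hraised dist_nonneg dist_nonneg).trans hdist

end Profile
section Tube

variable {X : Type*} [MetricSpace X] {δ : ℝ} (T : TubeSite X δ)

/-- The point of the tube at height `s` and angle `u`. The circle at height `s` has radius `δ - |s|`
in the last coordinate, which keeps the tube embedded while its ends lie over the rims. -/
noncomputable def tube (s : ℝ) (u : Circle) : C(X, ℝ) × ℝ × ℂ :=
  (T.profile s u, s, (δ - |s|) • (u : ℂ))

/-- The copy of `X` which meets the tube along the rim of the piece `b`. -/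
def site (_ : TubeSite X δ) (b : Bool) (x : X) : C(X, ℝ) × ℝ × ℂ :=
  (distTo x, pole δ b, 0)

/-- The tube as a map defined on a compact space. -/
noncomputable def tubeMap (p : Icc (-δ) δ × Circle) : C(X, ℝ) × ℝ × ℂ :=
  T.tube p.1 p.2

theorem tube_pole (b : Bool) (u : Circle) :
    T.tube (pole δ b) u = T.site b ((T.piece b).rim u) := by
  simp [tube, site, profile_pole, abs_pole T.pos.le]

theorem tube_mem {s : ℝ} (hs : s ∈ Icc (-δ) δ) (u : Circle) : T.tube s u ∈ range T.tubeMap :=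
  ⟨(⟨s, hs⟩, u), rfl⟩

theorem site_rim_mem (b : Bool) (u : Circle) :
    T.site b ((T.piece b).rim u) ∈ range T.tubeMap :=
  T.tube_pole b u ▸ T.tube_mem (pole_mem_Icc T.pos.le b) u

variable [CompactSpace X]

theorem isometry_site (b : Bool) : Isometry (T.site b) :=
  Isometry.of_dist_eq fun x y => by
    simp [site, Prod.dist_eq, isometry_distTo.dist_eq]

theorem injective_tubeMap : Function.Injective T.tubeMap := by
  rintro ⟨⟨s, hs⟩, u⟩ ⟨⟨s', hs'⟩, v⟩ h
  obtain rfl : s = s' := congrArg (fun z => z.2.1) h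
  have hscale : (δ - |s|) • (u : ℂ) = (δ - |s|) • (v : ℂ) := congrArg (fun z => z.2.2) h
  obtain hne | hpole := ne_or_eq (δ - |s|) 0
  · rw [Circle.ext (smul_right_injective ℂ hne hscale)]
  · obtain ⟨b, rfl⟩ : ∃ b, s = pole δ b :=
      (eq_or_eq_neg_of_abs_eq (sub_eq_zero.1 hpole).symm).elim (⟨true, ·⟩) (⟨false, ·⟩)
    have hsite : T.site b ((T.piece b).rim u) = T.site b ((T.piece b).rim v) := by
      rw [← tube_pole, ← tube_pole]
      exact h
    rw [(T.piece b).injective_rim ((T.isometry_site b).injective hsite)]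

variable {T} {s s' h L η : ℝ} {u v : Circle}

theorem lipschitzWith_tube_left (T : TubeSite X δ) (u : Circle) :
    LipschitzWith 1 fun s => T.tube s u :=
  LipschitzWith.of_dist_le_mul fun s s' => by
    have hradius : ‖(δ - |s|) • (u : ℂ) - (δ - |s'|) • (u : ℂ)‖ ≤ |s - s'| := by
      rw [← sub_smul, norm_smul, Circle.norm_coe, mul_one, sub_sub_sub_cancel_left, norm_sub_rev]
      exact abs_abs_sub_abs_le_abs_sub s s'
    rw [NNReal.coe_one, one_mul, Prod.dist_eq, Prod.dist_eq]
    exact max_le (T.dist_profile_le_of_height s s' u)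
      (max_le le_rfl ((dist_eq_norm _ _).trans_le hradius))

theorem dist_tube_le (hL : IsAffineModulus T.rims (δ - |s|) L) (u v : Circle) :
    dist (T.tube s u) (T.tube s v) ≤ max L δ * dist u v := by
  have hradius : ‖(δ - |s|) • (u : ℂ) - (δ - |s|) • (v : ℂ)‖ ≤ δ * dist u v := by
    rw [← smul_sub, norm_smul, circle_dist_eq, Real.norm_of_nonneg hL.const_nonneg]
    gcongr
    exact sub_le_self _ (abs_nonneg s)
  rw [Prod.dist_eq, Prod.dist_eq, max_mul_of_nonneg _ _ dist_nonneg]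
  refine max_le_max (dist_profile_le_of_angle hL u v) (max_le ?_ ?_)
  · exact (dist_self s).trans_le (mul_nonneg T.pos.le dist_nonneg)
  · exact (dist_eq_norm _ _).trans_le hradius

theorem lengthJoinedIn_tube_radial (hs : s ∈ Icc (-δ) δ) (hs' : s' ∈ Icc (-δ) δ) (u : Circle) :
    LengthJoinedIn (range T.tubeMap) |s' - s| (T.tube s u) (T.tube s' u) := by
  simpa using LengthJoinedIn.of_lipschitzOnWith (T.lipschitzWith_tube_left u).lipschitzOnWith
    fun r hr => T.tube_mem (uIcc_subset_Icc hs hs' hr) u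

theorem lengthJoinedIn_tube_angular (hL : IsAffineModulus T.rims (δ - |h|) L) (u v : Circle) :
    LengthJoinedIn (range T.tubeMap) (max L δ * (2 * dist u v)) (T.tube h u) (T.tube h v) := by
  have hmax : 0 ≤ max L δ := T.pos.le.trans (le_max_right L δ)
  have hlip : LipschitzWith ⟨max L δ, hmax⟩ (T.tube h) :=
    LipschitzWith.of_dist_le_mul (dist_tube_le hL)
  have hh : h ∈ Icc (-δ) δ := abs_le.1 (sub_nonneg.1 hL.const_nonneg)
  refine ((LengthJoinedIn.circle u v).image hlip.lipschitzOnWith).mono_set ?_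
  exact image_subset_iff.2 fun w _ => T.tube_mem hh w

/-- The path goes radially to the height `h`, where it turns. -/
theorem lengthJoinedIn_tube (hs : s ∈ Icc (-δ) δ) (hs' : s' ∈ Icc (-δ) δ)
    (hL : IsAffineModulus T.rims (δ - |h|) L) (u v : Circle) :
    LengthJoinedIn (range T.tubeMap) (|h - s| + max L δ * (2 * dist u v) + |s' - h|)
      (T.tube s u) (T.tube s' v) :=
  have hh : h ∈ Icc (-δ) δ := abs_le.1 (sub_nonneg.1 hL.const_nonneg)
  ((lengthJoinedIn_tube_radial hs hh u).trans (lengthJoinedIn_tube_angular hL u v)).trans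
    (lengthJoinedIn_tube_radial hh hs' v)

theorem lengthJoinedIn_range_tubeMap {z z' : C(X, ℝ) × ℝ × ℂ} (hz : z ∈ range T.tubeMap)
    (hz' : z' ∈ range T.tubeMap) : LengthJoinedIn (range T.tubeMap) (6 * δ) z z' := by
  obtain ⟨⟨⟨s, hs⟩, u⟩, rfl⟩ := hz
  obtain ⟨⟨⟨s', hs'⟩, v⟩, rfl⟩ := hz'
  have hL : IsAffineModulus T.rims (δ - |0|) 0 := by simpa using T.isAffineModulus_rims
  refine (lengthJoinedIn_tube hs hs' hL u v).mono_length ?_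
  have hdiam : dist u v ≤ 2 := by
    rw [circle_dist_eq]
    refine (norm_sub_le _ _).trans_eq ?_
    rw [Circle.norm_coe, Circle.norm_coe, one_add_one_eq_two]
  have := mul_le_mul_of_nonneg_left hdiam T.pos.le
  rw [max_eq_right T.pos.le, zero_sub, abs_neg, sub_zero]
  linarith [abs_le.2 hs, abs_le.2 hs']

theorem eventually_lengthJoinedIn_tubeMap (T : TubeSite X δ) (p : Icc (-δ) δ × Circle)
    (hη : 0 < η) :
    ∀ᶠ q in 𝓝 p, LengthJoinedIn (range T.tubeMap) η (T.tubeMap p) (T.tubeMap q) := by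
  obtain ⟨⟨s, hs⟩, u⟩ := p
  obtain ⟨h, hh, hsh⟩ : ∃ h ∈ Ioo (-δ) δ, dist s h < η / 2 := by
    have hs' := hs
    rw [← closure_Ioo (by linarith [T.pos] : -δ ≠ δ)] at hs'
    exact Metric.mem_closure_iff.1 hs' _ (half_pos hη)
  obtain ⟨L, hL⟩ := exists_isAffineModulus T.continuous_rims (sub_pos.2 (abs_lt.2 hh))
  have hcont : Continuous fun q : Icc (-δ) δ × Circle =>
      |h - s| + max L δ * (2 * dist u q.2) + |(q.1 : ℝ) - h| := by fun_prop
  have hlt : |h - s| + max L δ * (2 * dist u u) + |s - h| < η := by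
    rw [Real.dist_eq] at hsh
    rw [dist_self, mul_zero, mul_zero, add_zero, abs_sub_comm h]
    linarith
  filter_upwards [hcont.continuousAt.eventually_lt_const hlt] with q hq
  exact (lengthJoinedIn_tube hs q.1.2 hL u q.2).mono_length hq.le

theorem isClosedEmbedding_tubeMap (T : TubeSite X δ) : Topology.IsClosedEmbedding T.tubeMap := by
  refine Continuous.isClosedEmbedding (continuous_iff_continuousAt.2 fun p => ?_)
    T.injective_tubeMap
  refine Metric.tendsto_nhds.2 fun η hη => ?_
  filter_upwards [T.eventually_lengthJoinedIn_tubeMap p (half_pos hη)] with q hq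
  rw [dist_comm]
  exact hq.dist_le.trans_lt (half_lt_self hη)

end Tube
end TubeSite

/-! ### The surgery along a tube -/

theorem BorderedPiece.exists_cut {X : Type*} [MetricSpace X] (P : BorderedPiece X) {x y : X} {ℓ : ℝ}
    (h : LengthJoinedIn univ ℓ x y) (hx : x ∈ P.carrier) :
    (y ∈ P.carrier \ range P.rim ∧ LengthJoinedIn P.carrier ℓ x y) ∨
      ∃ u ℓ₁ ℓ₂, ℓ₁ + ℓ₂ = ℓ ∧ LengthJoinedIn P.carrier ℓ₁ x (P.rim u) ∧
        LengthJoinedIn univ ℓ₂ (P.rim u) y := by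
  obtain h | ⟨c, ⟨hc, hcr⟩, ℓ₁, ℓ₂, hsum, h₁, h₂⟩ :=
    h.exists_cut P.isClosed P.isOpen_diff sdiff_subset hx <;> rw [univ_inter] at *
  · exact .inl ⟨h.right_mem, h.mono_set sdiff_subset⟩
  · obtain ⟨u, rfl⟩ : c ∈ range P.rim := by_contra fun hcu => hcr ⟨hc, hcu⟩
    exact .inr ⟨u, ℓ₁, ℓ₂, hsum, h₁, h₂⟩

theorem eventually_nhdsWithin_image {Y Z : Type*} [TopologicalSpace Y] [TopologicalSpace Z]
    {f : Y → Z} (hf : Topology.IsClosedEmbedding f) {s : Set Y} (hs : IsClosed s) {p : Z → Prop}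
    {z : Z} (h : ∀ y ∈ s, f y = z → ∀ᶠ y' in 𝓝[s] y, p (f y')) : ∀ᶠ z' in 𝓝[f '' s] z, p z' := by
  by_cases hz : z ∈ f '' s
  · obtain ⟨y, hy, rfl⟩ := hz
    rw [← hf.isEmbedding.map_nhdsWithin_eq, eventually_map]
    exact h y hy rfl
  · rw [notMem_closure_iff_nhdsWithin_eq_bot.1 ((hf.isClosedMap s hs).closure_eq.symm ▸ hz)]
    exact eventually_bot

namespace TubeSite

section Surgery

variable {X : Type*} [MetricSpace X] {δ : ℝ} {T : TubeSite X δ} {b b' : Bool}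
  {x y : X} {ℓ r η : ℝ} {z z' : C(X, ℝ) × ℝ × ℂ}

/-- The two pieces, connected by the tube, in a common ambient metric space. -/
def surgery (T : TubeSite X δ) : Set (C(X, ℝ) × ℝ × ℂ) :=
  range T.tubeMap ∪ ⋃ b, T.site b '' (T.piece b).carrier

theorem range_tubeMap_subset_surgery (T : TubeSite X δ) : range T.tubeMap ⊆ T.surgery :=
  subset_union_left

theorem image_site_subset_surgery (T : TubeSite X δ) (b : Bool) :
    T.site b '' (T.piece b).carrier ⊆ T.surgery :=
  subset_union_of_subset_right (subset_iUnion (fun b => T.site b '' (T.piece b).carrier) b) _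

variable [CompactSpace X]

theorem isCompact_surgery (T : TubeSite X δ) : IsCompact T.surgery :=
  (isCompact_range T.isClosedEmbedding_tubeMap.continuous).union <| isCompact_iUnion fun b =>
    (T.piece b).isClosed.isCompact.image (T.isometry_site b).continuous

theorem lengthJoinedIn_surgery_site (h : LengthJoinedIn (T.piece b).carrier ℓ x y) :
    LengthJoinedIn T.surgery ℓ (T.site b x) (T.site b y) := by
  simpa using (h.image (T.isometry_site b).lipschitz.lipschitzOnWith).mono_set
    (T.image_site_subset_surgery b)

theorem lengthJoinedIn_surgery_tube (hz : z ∈ range T.tubeMap) (hz' : z' ∈ range T.tubeMap) :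
    LengthJoinedIn T.surgery (6 * δ) z z' :=
  (lengthJoinedIn_range_tubeMap hz hz').mono_set T.range_tubeMap_subset_surgery

theorem eventually_lengthJoinedIn_rim (T : TubeSite X δ) (b : Bool) (x : X) (hη : 0 < η) :
    ∀ᶠ c in 𝓝[range (T.piece b).rim] x,
      LengthJoinedIn T.surgery η (T.site b x) (T.site b c) := by
  have hrim := (T.piece b).continuous_rim.isClosedEmbedding (T.piece b).injective_rim
  rw [← image_univ]
  refine eventually_nhdsWithin_image hrim isClosed_univ fun u _ hu => ?_
  let s : Icc (-δ) δ := ⟨pole δ b, pole_mem_Icc T.pos.le b⟩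
  rw [nhdsWithin_univ]
  filter_upwards [(Continuous.prodMk_right s).continuousAt.eventually
    (T.eventually_lengthJoinedIn_tubeMap (s, u) hη)] with v hv
  rw [← hu, ← tube_pole, ← tube_pole]
  exact hv.mono_set T.range_tubeMap_subset_surgery

end Surgery

section LengthSpace

variable {X : Type} [MetricSpace X] [CompactSpace X] {δ : ℝ} {b b' : Bool} {x y : X} {r η : ℝ}
  {z z' : C(X, ℝ) × ℝ × ℂ}

theorem eventually_lengthJoinedIn_piece (hX : IsLengthSpace X) (T : TubeSite X δ) (b : Bool) (x : X)
    (hη : 0 < η) :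
    ∀ᶠ y in 𝓝[(T.piece b).carrier] x, LengthJoinedIn T.surgery η (T.site b x) (T.site b y) := by
  obtain ⟨ρ, hρ, hrim⟩ := Metric.mem_nhdsWithin_iff.1
    (T.eventually_lengthJoinedIn_rim b x (half_pos hη))
  filter_upwards [inter_mem_nhdsWithin _
    (ball_mem_nhds x (lt_min (half_pos hρ) (half_pos hη)))] with y hy
  have hpath := isLengthSpace_iff.1 hX y x _ (mem_ball.1 hy.2)
  obtain ⟨-, hyx⟩ | ⟨u, ℓ₁, ℓ₂, hsum, hyu, hux⟩ := (T.piece b).exists_cut hpath hy.1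
  · refine (lengthJoinedIn_surgery_site hyx).symm.mono_length ((min_le_right _ _).trans ?_)
    linarith
  · have hu : dist ((T.piece b).rim u) x < ρ := by
      linarith [hux.dist_le, hyu.1, min_le_left (ρ / 2) (η / 2)]
    refine (hrim ⟨mem_ball.2 hu, mem_range_self u⟩ |>.trans
      (lengthJoinedIn_surgery_site hyu).symm).mono_length ?_
    linarith [hux.1, min_le_right (ρ / 2) (η / 2)]

theorem eventually_lengthJoinedIn_surgery (hX : IsLengthSpace X) (T : TubeSite X δ)
    (z : C(X, ℝ) × ℝ × ℂ) (hη : 0 < η) :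
    ∀ᶠ z' in 𝓝[T.surgery] z, LengthJoinedIn T.surgery η z z' := by
  have hnhds : 𝓝[T.surgery] z =
      𝓝[range T.tubeMap] z ⊔ ⨆ b, 𝓝[T.site b '' (T.piece b).carrier] z := by
    rw [surgery, nhdsWithin_union, nhdsWithin_iUnion]
  rw [hnhds, eventually_sup, eventually_iSup]
  constructor
  · rw [← image_univ]
    refine eventually_nhdsWithin_image T.isClosedEmbedding_tubeMap isClosed_univ fun p _ hp => ?_
    filter_upwards [mem_nhdsWithin_of_mem_nhds (T.eventually_lengthJoinedIn_tubeMap p hη)] with q hq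
    exact hp ▸ hq.mono_set T.range_tubeMap_subset_surgery
  · intro b
    refine eventually_nhdsWithin_image (T.isometry_site b).isClosedEmbedding (T.piece b).isClosed
      fun x _ hx => ?_
    exact hx ▸ T.eventually_lengthJoinedIn_piece hX b x hη

theorem lengthJoinedIn_surgery (hX : IsLengthSpace X) (T : TubeSite X δ)
    (hx : x ∈ (T.piece b).carrier) (hy : y ∈ (T.piece b').carrier) (hr : dist x y < r) :
    LengthJoinedIn T.surgery (r + 6 * δ) (T.site b x) (T.site b' y) := by
  have hpath := isLengthSpace_iff.1 hX x y r hr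
  obtain ⟨⟨hyb, -⟩, hxy⟩ | ⟨u, ℓ₁, ℓ₂, hsum, hxu, huy⟩ := (T.piece b).exists_cut hpath hx
  · obtain rfl := T.eq_of_mem hyb hy
    exact (lengthJoinedIn_surgery_site hxy).mono_length (by linarith [T.pos])
  obtain ⟨⟨hub, hur⟩, -⟩ | ⟨v, ℓ₃, ℓ₄, hsum', hyv, hvu⟩ := (T.piece b').exists_cut huy.symm hy
  · obtain rfl := T.eq_of_mem hub ((T.piece b).rim_mem u)
    exact absurd (mem_range_self u) hur
  · have htube := lengthJoinedIn_surgery_tube (T.site_rim_mem b u) (T.site_rim_mem b' v)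
    refine (((lengthJoinedIn_surgery_site hxu).trans htube).trans
      (lengthJoinedIn_surgery_site hyv).symm).mono_length ?_
    linarith [hvu.1]

theorem exists_lengthJoinedIn_surgery (hX : IsLengthSpace X) (T : TubeSite X δ)
    (hz : z ∈ T.surgery) (hz' : z' ∈ T.surgery) : ∃ ℓ, LengthJoinedIn T.surgery ℓ z z' := by
  have hhub : ∀ z ∈ T.surgery,
      ∃ ℓ, LengthJoinedIn T.surgery ℓ z (T.site true ((T.piece true).rim 1)) := by
    rintro z (hz | hz)
    · exact ⟨_, lengthJoinedIn_surgery_tube hz (T.site_rim_mem true 1)⟩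
    · obtain ⟨b, x, hx, rfl⟩ := mem_iUnion.1 hz
      exact ⟨_, T.lengthJoinedIn_surgery hX hx ((T.piece true).rim_mem 1) (lt_add_one _)⟩
  obtain ⟨ℓ, h⟩ := hhub z hz
  obtain ⟨ℓ', h'⟩ := hhub z' hz'
  exact ⟨_, h.trans h'.symm⟩

theorem abs_dist_sub_innerDist_le (hX : IsLengthSpace X) (T : TubeSite X δ)
    (hx : x ∈ (T.piece b).carrier) (hy : y ∈ (T.piece b').carrier) :
    |dist x y - innerDist T.surgery (T.site b x) (T.site b' y)| ≤ 6 * δ := by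
  have hlower : dist x y ≤ innerDist T.surgery (T.site b x) (T.site b' y) :=
    le_innerDist ⟨_, T.lengthJoinedIn_surgery hX hx hy (lt_add_one _)⟩ fun ℓ hℓ =>
      ((isometry_distTo.dist_eq x y).symm.trans_le (le_max_left _ _)).trans hℓ.dist_le
  have hupper : innerDist T.surgery (T.site b x) (T.site b' y) ≤ dist x y + 6 * δ := by
    refine le_of_forall_pos_le_add fun η hη => ?_
    have := (T.lengthJoinedIn_surgery hX hx hy (lt_add_of_pos_right _ hη)).innerDist_le
    linarith
  rw [abs_sub_le_iff]
  constructor <;> linarith [T.pos]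

theorem ghDist_surgery_le [Nonempty X] (hX : IsLengthSpace X) (T : TubeSite X δ) {Z : Type}
    [MetricSpace Z] [CompactSpace Z] [Nonempty Z] {j : Z → C(X, ℝ) × ℝ × ℂ}
    (hj : range j = T.surgery) (hdist : ∀ z z', dist z z' = innerDist T.surgery (j z) (j z')) :
    ghDist X Z ≤ 10 * δ := by
  have hlift : ∀ x : ⋃ b, (T.piece b).carrier,
      ∃ b, (x : X) ∈ (T.piece b).carrier ∧ ∃ z, j z = T.site b x := fun x =>
    let ⟨b, hb⟩ := mem_iUnion.1 x.2
    ⟨b, hb, hj.ge (T.image_site_subset_surgery b (mem_image_of_mem _ hb))⟩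
  choose side hside Φ hΦ using hlift
  have hnear : ∀ z, ∃ x, dist z (Φ x) ≤ 6 * δ := by
    intro z
    obtain hz | hz := hj.le (mem_range_self z)
    · let x : ⋃ b, (T.piece b).carrier :=
        ⟨(T.piece true).rim 1, mem_iUnion.2 ⟨true, (T.piece true).rim_mem 1⟩⟩
      refine ⟨x, ?_⟩
      rw [hdist, hΦ, T.eq_of_mem (hside x) ((T.piece true).rim_mem 1)]
      exact (lengthJoinedIn_surgery_tube hz (T.site_rim_mem true 1)).innerDist_le
    · obtain ⟨b, x, hx, hxz⟩ := mem_iUnion.1 hz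
      refine ⟨⟨x, mem_iUnion.2 ⟨b, hx⟩⟩, ?_⟩
      rw [hdist, hΦ, T.eq_of_mem (hside _) hx, ← hxz, innerDist_self (hj.le ⟨z, hxz.symm⟩)]
      linarith [T.pos]
  have hgh := ghDist_le_of_approx_subsets Φ
    (fun x => let ⟨b, y, hy, hxy⟩ := T.exists_near x; ⟨y, mem_iUnion.2 ⟨b, hy⟩, hxy⟩) hnear
    fun x y => by
      rw [hdist, hΦ, hΦ]
      exact T.abs_dist_sub_innerDist_le hX (hside x) (hside y)
  linarith

theorem exists_isLengthSpace_surgery [Nonempty X] (hX : IsLengthSpace X) (T : TubeSite X δ) :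
    ∃ (Z : Type) (_ : MetricSpace Z) (_ : Nonempty Z) (_ : CompactSpace Z)
      (j : Z → C(X, ℝ) × ℝ × ℂ), Topology.IsEmbedding j ∧ range j = T.surgery ∧
      IsLengthSpace Z ∧ ghDist X Z ≤ 10 * δ := by
  obtain ⟨Z, _, j, hj, hrange, hZ, hdist⟩ := exists_isLengthSpace_innerDist
    (fun _ hz _ hz' => T.exists_lengthJoinedIn_surgery hX hz hz')
    (fun z _ _ hη => T.eventually_lengthJoinedIn_surgery hX z hη)
  have : CompactSpace Z := by
    rw [← isCompact_univ_iff, hj.isCompact_iff, image_univ, hrange]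
    exact T.isCompact_surgery
  have : Nonempty Z := by
    rw [← range_nonempty_iff_nonempty (f := j), hrange]
    exact ⟨_, .inl (T.site_rim_mem true 1)⟩
  exact ⟨Z, _, this, ‹_›, j, hj, hrange, hZ, T.ghDist_surgery_le hX hrange hdist⟩

end LengthSpace
end TubeSite

/-! ### The surgery as a connected sum -/

/-- Both ranges are the quotient of `K` by the common kernel of the two maps. -/
theorem nonempty_homeomorph_range {K Y Z : Type*} [TopologicalSpace K] [CompactSpace K]
    [TopologicalSpace Y] [T2Space Y] [TopologicalSpace Z] [T2Space Z] {f : K → Y} {g : K → Z}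
    (hf : Continuous f) (hg : Continuous g) (hker : ∀ a b, f a = f b ↔ g a = g b) :
    Nonempty (range f ≃ₜ range g) := by
  have hf' := hf.isClosedMap.isStrictMap hf
  have hg' := hg.isClosedMap.isStrictMap hg
  exact ⟨(Homeomorph.quotientKerEquivRange hf').symm.trans
    ((Homeomorph.Quotient.congrRight hker).trans (Homeomorph.quotientKerEquivRange hg'))⟩

theorem pole_mul_pole (δ : ℝ) (b : Bool) : pole 1 b * pole δ b = δ := by
  cases b <;> simp [pole]

theorem pole_ne_zero {δ : ℝ} (hδ : 0 < δ) {b : Bool} : pole δ b ≠ 0 :=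
  abs_ne_zero.1 ((abs_pole hδ.le b).trans_ne hδ.ne')

theorem eq_of_nonneg_pole_mul_pole {δ : ℝ} (hδ : 0 < δ) {b b' : Bool}
    (h : 0 ≤ pole 1 b * pole δ b') : b' = b := by
  cases b <;> cases b' <;> simp_all [pole] <;> linarith

theorem pole_mul_mem_Icc {δ : ℝ} (hδ : 0 ≤ δ) {b : Bool} (t : I) : pole δ b * t ∈ Icc (-δ) δ := by
  rw [mem_Icc, ← abs_le, abs_mul, abs_pole hδ, abs_of_nonneg t.2.1]
  exact mul_le_of_le_one_right hδ t.2.2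

theorem exists_eq_pole_mul {δ s : ℝ} (hδ : 0 < δ) {b : Bool} (hs : s ∈ Icc (-δ) δ)
    (h : 0 ≤ pole 1 b * s) : ∃ t : I, s = pole δ b * t := by
  refine ⟨⟨pole 1 b * s / δ, by positivity, ?_⟩, ?_⟩
  · rw [div_le_one hδ]
    cases b <;> simp [pole] <;> linarith [hs.1, hs.2]
  · cases b <;> simp [pole] <;> field_simp

namespace BorderedPiece

variable {S X : Type*} [TopologicalSpace S] [TopologicalSpace X]

/-- The piece `P` is the copy under `i` of the complement of the open disc `k '' ball 0 2`, and its
rim is the boundary of that disc. -/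
structure IsDiscComplement (P : BorderedPiece X) (i : S → X) (k : ℂ → S) : Prop where
  continuous : Continuous i
  injective : Function.Injective i
  isOpenEmbedding : Topology.IsOpenEmbedding k
  carrier_eq : P.carrier = i '' (k '' ball 0 2)ᶜ
  rim_eq : ∀ u, P.rim u = i (k ((2 : ℝ) • (u : ℂ)))

end BorderedPiece

/-- The standard identification of the complex plane with the Euclidean plane. -/
noncomputable def planeHomeomorph : ℂ ≃ₜ EuclideanSpace ℝ (Fin 2) :=
  Complex.orthonormalBasisOneI.repr.toHomeomorph

theorem nonempty_homeomorph_ball {S : Type*} [TopologicalSpace S] {k : ℂ → S}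
    (hk : Topology.IsOpenEmbedding k) :
    Nonempty (↥(k '' ball 0 1) ≃ₜ ball (0 : EuclideanSpace ℝ (Fin 2)) 1) := by
  have h : planeHomeomorph '' ball 0 1 = ball (0 : EuclideanSpace ℝ (Fin 2)) 1 := by
    have := Complex.orthonormalBasisOneI.repr.image_ball 0 1
    rwa [map_zero] at this
  exact ⟨(hk.isEmbedding.homeomorphImage (ball 0 1)).symm.trans
    ((planeHomeomorph.image (ball 0 1)).trans (Homeomorph.setCongr h))⟩

theorem frontier_setOf_nonneg {Z : Type*} [TopologicalSpace Z] {f : Z → ℝ} (hf : Continuous f)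
    (h : ∀ z, f z = 0 → ∃ᶠ z' in 𝓝 z, f z' < 0) : frontier {z | 0 ≤ f z} = {z | f z = 0} := by
  refine Subset.antisymm (fun z hz => (frontier_le_subset_eq continuous_const hf hz).symm)
    fun z hz => ?_
  rw [frontier_eq_closure_inter_closure]
  refine ⟨subset_closure hz.ge, mem_closure_iff_frequently.2 ?_⟩
  exact (h z hz).mono fun z' => not_le.2

section Collar

variable {S : Type*} {k : ℂ → S} {p q : I × Circle} {x : S}

/-- The closed annulus of radii `1` and `2` in the disc parametrized by `k`. -/
noncomputable def collar (k : ℂ → S) (p : I × Circle) : S :=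
  k ((1 + p.1 : ℝ) • (p.2 : ℂ))

theorem norm_smul_circle (t : I) (u : Circle) : ‖(1 + t : ℝ) • (u : ℂ)‖ = 1 + t := by
  rw [norm_smul, Circle.norm_coe, mul_one, Real.norm_of_nonneg (by linarith [t.2.1])]

theorem collar_injective (hk : Function.Injective k) : Function.Injective (collar k) := by
  rintro ⟨t, u⟩ ⟨t', v⟩ h
  have hsmul : (1 + t : ℝ) • (u : ℂ) = (1 + t' : ℝ) • (v : ℂ) := hk h
  obtain rfl : t = t' := by
    have := congrArg norm hsmul
    rw [norm_smul_circle, norm_smul_circle] at this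
    exact Subtype.ext (add_left_cancel this)
  have hpos : (1 + t : ℝ) ≠ 0 := by linarith [t.2.1]
  rw [Circle.ext (smul_right_injective ℂ hpos hsmul)]

theorem collar_eq_iff (hx : x ∉ k '' ball 0 2) :
    collar k p = x ↔ p.1 = 1 ∧ k ((2 : ℝ) • (p.2 : ℂ)) = x := by
  obtain ⟨t, u⟩ := p
  constructor
  · rintro rfl
    obtain rfl : t = 1 := by
      by_contra ht
      refine hx (mem_image_of_mem k (mem_ball_zero_iff.2 ?_))
      rw [norm_smul_circle]
      have : (t : ℝ) < 1 := unitInterval.lt_one_iff_ne_one.2 ht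
      linarith
    exact ⟨rfl, by norm_num [collar]⟩
  · rintro ⟨rfl, rfl⟩
    norm_num [collar]

theorem range_collar_union (hk : Function.Injective k) :
    range (collar k) ∪ (k '' ball 0 2)ᶜ = (k '' ball 0 1)ᶜ := by
  ext x
  constructor
  · rintro (⟨⟨t, u⟩, rfl⟩ | hx)
    · rintro ⟨v, hv, hvk⟩
      rw [mem_ball_zero_iff, hk hvk, norm_smul_circle] at hv
      linarith [t.2.1]
    · exact fun h => hx (image_mono (ball_subset_ball one_le_two) h)
  · refine fun hx => or_iff_not_imp_right.2 fun hx₂ => ?_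
    obtain ⟨v, hv, rfl⟩ := not_not.1 hx₂
    have hv₁ : 1 ≤ ‖v‖ := not_lt.1 fun h => hx (mem_image_of_mem k (mem_ball_zero_iff.2 h))
    have hv₂ : ‖v‖ < 2 := mem_ball_zero_iff.1 hv
    refine ⟨(⟨‖v‖ - 1, by linarith, by linarith⟩, Circle.exp v.arg), ?_⟩
    simp [collar]

end Collar

namespace TubeSite

section Half

variable {X : Type*} [MetricSpace X] {δ : ℝ} {T : TubeSite X δ} {b : Bool}
  {S : Type*} [TopologicalSpace S] {i : S → X} {k : ℂ → S}

variable (T b) in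
/-- The part of the surgery on the side of the piece `b`, up to the middle of the tube. -/
def half : Set (C(X, ℝ) × ℝ × ℂ) :=
  {z ∈ T.surgery | 0 ≤ pole 1 b * z.2.1}

variable (T) in
/-- The middle circle of the tube. -/
def equator : Set (C(X, ℝ) × ℝ × ℂ) :=
  {z ∈ T.surgery | z.2.1 = 0}

theorem half_eq (T : TubeSite X δ) (b : Bool) : T.half b =
    range (fun p : I × Circle => T.tube (pole δ b * p.1) p.2) ∪
      T.site b '' (T.piece b).carrier := by
  ext z
  constructor
  · rintro ⟨⟨⟨⟨s, hs⟩, u⟩, rfl⟩ | hz, hzb⟩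
    · obtain ⟨t, rfl⟩ := exists_eq_pole_mul T.pos hs hzb
      exact .inl ⟨(t, u), rfl⟩
    · obtain ⟨b', x, hx, rfl⟩ := mem_iUnion.1 hz
      obtain rfl := eq_of_nonneg_pole_mul_pole T.pos hzb
      exact .inr (mem_image_of_mem _ hx)
  · rintro (⟨⟨t, u⟩, rfl⟩ | ⟨x, hx, rfl⟩)
    · refine ⟨.inl (T.tube_mem (pole_mul_mem_Icc T.pos.le t) u), ?_⟩
      change 0 ≤ pole 1 b * (pole δ b * t)
      rw [← mul_assoc, pole_mul_pole]
      exact mul_nonneg T.pos.le t.2.1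
    · exact ⟨T.image_site_subset_surgery b (mem_image_of_mem _ hx),
        (pole_mul_pole δ b).symm ▸ T.pos.le⟩

theorem equator_eq (T : TubeSite X δ) : T.equator = range (T.tube 0) := by
  ext z
  constructor
  · rintro ⟨⟨⟨⟨s, hs⟩, u⟩, rfl⟩ | hz, hz0⟩
    · obtain rfl : s = 0 := hz0
      exact ⟨u, rfl⟩
    · obtain ⟨b, x, -, rfl⟩ := mem_iUnion.1 hz
      exact absurd hz0 (pole_ne_zero T.pos)
  · rintro ⟨u, rfl⟩
    exact ⟨.inl (T.tube_mem ⟨neg_nonpos.2 T.pos.le, T.pos.le⟩ u), rfl⟩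

/-- A parametrization of `T.half b` by the collar of a disc and by the complement of the disc. -/
noncomputable def halfMap (T : TubeSite X δ) (b : Bool) (i : S → X) (k : ℂ → S) :
    (I × Circle) ⊕ ↥(k '' ball 0 2)ᶜ → C(X, ℝ) × ℝ × ℂ :=
  Sum.elim (fun p => T.tube (pole δ b * p.1) p.2) fun x => T.site b (i x)

theorem half_inter (T : TubeSite X δ) : T.half true ∩ T.half false = T.equator := by
  ext z
  simp only [half, equator, mem_inter_iff, mem_ofPred_eq, pole]
  grind

theorem range_halfMap (h : (T.piece b).IsDiscComplement i k) :
    range (T.halfMap b i k) = T.half b := by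
  rw [halfMap, Sum.elim_range, half_eq, h.carrier_eq, ← image_comp,
    image_eq_range (T.site b ∘ i)]
  rfl

variable [CompactSpace X]

theorem continuous_tube {K : Type*} [TopologicalSpace K] {s : K → ℝ} {u : K → Circle}
    (hs : Continuous s) (hmem : ∀ a, s a ∈ Icc (-δ) δ) (hu : Continuous u) :
    Continuous fun a => T.tube (s a) (u a) := by
  have hpair : Continuous fun a => ((⟨s a, hmem a⟩, u a) : Icc (-δ) δ × Circle) :=
    (hs.subtype_mk hmem).prodMk hu
  exact (T.isClosedEmbedding_tubeMap.continuous.comp hpair :)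

theorem tube_eq_tube_iff {s s' : ℝ} {u v : Circle} (hs : s ∈ Icc (-δ) δ) (hs' : s' ∈ Icc (-δ) δ) :
    T.tube s u = T.tube s' v ↔ s = s' ∧ u = v := by
  change T.tubeMap (⟨s, hs⟩, u) = T.tubeMap (⟨s', hs'⟩, v) ↔ _
  rw [T.injective_tubeMap.eq_iff, Prod.mk.injEq, Subtype.mk.injEq]

theorem tube_eq_site_iff {t : ℝ} {u : Circle} {x : X} :
    T.tube (pole δ b * t) u = T.site b x ↔ t = 1 ∧ (T.piece b).rim u = x := by
  have hpole := pole_ne_zero T.pos (b := b)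
  constructor
  · intro h
    have hheight : pole δ b * t = pole δ b := congrArg (fun z => z.2.1) h
    obtain rfl : t = 1 := by simpa [hpole] using hheight
    rw [mul_one, tube_pole] at h
    exact ⟨rfl, (T.isometry_site b).injective h⟩
  · rintro ⟨rfl, rfl⟩
    rw [mul_one, tube_pole]

theorem nonempty_homeomorph_equator (T : TubeSite X δ) :
    Nonempty (T.equator ≃ₜ AddCircle (1 : ℝ)) := by
  have hmem : (0 : ℝ) ∈ Icc (-δ) δ := ⟨neg_nonpos.2 T.pos.le, T.pos.le⟩
  have hcont : Continuous (T.tube 0) :=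
    continuous_tube continuous_const (fun _ => hmem) continuous_id
  have hemb := hcont.isClosedEmbedding fun u v h => ((tube_eq_tube_iff hmem hmem).1 h).2
  exact ⟨(Homeomorph.setCongr T.equator_eq).trans
    (hemb.isEmbedding.toHomeomorph.symm.trans (AddCircle.homeomorphCircle one_ne_zero).symm)⟩

theorem halfMap_eq_iff (h : (T.piece b).IsDiscComplement i k)
    (a a' : (I × Circle) ⊕ ↥(k '' ball 0 2)ᶜ) :
    T.halfMap b i k a = T.halfMap b i k a' ↔
      Sum.elim (collar k) (↑) a = Sum.elim (collar k) ((↑) : ↥(k '' ball 0 2)ᶜ → S) a' := by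
  have hcross : ∀ (p : I × Circle) (x : ↥(k '' ball 0 2)ᶜ),
      T.tube (pole δ b * p.1) p.2 = T.site b (i x) ↔ collar k p = x := fun p x => by
    rw [tube_eq_site_iff, collar_eq_iff x.2, h.rim_eq, h.injective.eq_iff, Icc.coe_eq_one]
  obtain ⟨t, u⟩ | x := a <;> obtain ⟨t', v⟩ | y := a' <;>
    simp only [halfMap, Sum.elim_inl, Sum.elim_inr]
  · rw [tube_eq_tube_iff (pole_mul_mem_Icc T.pos.le t) (pole_mul_mem_Icc T.pos.le t'),
      mul_right_inj' (pole_ne_zero T.pos), (collar_injective h.isOpenEmbedding.injective).eq_iff,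
      Prod.mk.injEq, Subtype.coe_inj]
  · exact hcross (t, u) y
  · exact eq_comm.trans ((hcross (t', v) x).trans eq_comm)
  · rw [(T.isometry_site b).injective.eq_iff, h.injective.eq_iff]

theorem nonempty_homeomorph_half [CompactSpace S] [T2Space S]
    (h : (T.piece b).IsDiscComplement i k) : Nonempty (T.half b ≃ₜ ↥(k '' ball 0 1)ᶜ) := by
  have hk := h.isOpenEmbedding
  have : CompactSpace ↥(k '' ball 0 2)ᶜ :=
    isCompact_iff_compactSpace.1 (hk.isOpenMap _ isOpen_ball).isClosed_compl.isCompact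
  have hhalf : Continuous (T.halfMap b i k) := by
    refine .sumElim (continuous_tube (by fun_prop) (fun p => pole_mul_mem_Icc T.pos.le p.1)
      continuous_snd) ?_
    exact (T.isometry_site b).continuous.comp (h.continuous.comp continuous_subtype_val)
  have hcollar : Continuous (Sum.elim (collar k) ((↑) : ↥(k '' ball 0 2)ᶜ → S)) :=
    .sumElim (hk.continuous.comp (by fun_prop)) continuous_subtype_val
  obtain ⟨e⟩ := nonempty_homeomorph_range hhalf hcollar (halfMap_eq_iff h)
  rw [range_halfMap h, Sum.elim_range, Subtype.range_coe, range_collar_union hk.injective] at e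
  exact ⟨e⟩

end Half

section ConnectedSum

variable {X Z : Type*} [MetricSpace X] {δ : ℝ} {T : TubeSite X δ}
  {j : Z → C(X, ℝ) × ℝ × ℂ}

theorem preimage_half (hrange : range j = T.surgery) (b : Bool) :
    j ⁻¹' T.half b = {z | 0 ≤ pole 1 b * (j z).2.1} :=
  Set.ext fun z => and_iff_right (hrange.le (mem_range_self z))

theorem preimage_half_union (hrange : range j = T.surgery) :
    j ⁻¹' T.half true ∪ j ⁻¹' T.half false = univ := by
  rw [preimage_half hrange, preimage_half hrange]
  ext z
  simpa [pole] using le_total 0 (j z).2.1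

theorem frontier_preimage_half [TopologicalSpace Z] [CompactSpace X] (hj : Topology.IsEmbedding j)
    (hrange : range j = T.surgery) (b : Bool) :
    frontier (j ⁻¹' T.half b) = j ⁻¹' T.equator := by
  have hheight : Continuous fun z => pole 1 b * (j z).2.1 := by
    have := hj.continuous
    fun_prop
  rw [preimage_half hrange, frontier_setOf_nonneg hheight]
  · ext z
    simp only [equator, mem_ofPred_eq, mul_eq_zero, pole_ne_zero one_pos, false_or,
      preimage_ofPred_eq]
    exact (and_iff_right (hrange.le (mem_range_self z))).symm
  · intro z hz
    have hz : (j z).2.1 = 0 := (mul_eq_zero.1 hz).resolve_left (pole_ne_zero one_pos)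
    obtain ⟨u, hu⟩ := T.equator_eq.le ⟨hrange.le (mem_range_self z), hz⟩
    rw [hj.nhds_eq_comap, frequently_comap, ← hu]
    have hlim : Tendsto (fun t => T.tube (pole 1 b * t) u) (𝓝[<] 0) (𝓝 (T.tube 0 u)) := by
      have hcont : Continuous fun t => T.tube (pole 1 b * t) u :=
        (T.lipschitzWith_tube_left u).continuous.comp (continuous_const_mul _)
      simpa using hcont.continuousWithinAt.tendsto (x := 0) (s := Iio 0)
    refine hlim.frequently (Eventually.frequently ?_)
    filter_upwards [Ioo_mem_nhdsLT (neg_lt_zero.2 T.pos)] with t ht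
    have hmem : pole 1 b * t ∈ Icc (-δ) δ := by
      rw [mem_Icc, ← abs_le, abs_mul, abs_pole zero_le_one, one_mul, abs_of_neg ht.2]
      linarith [ht.1]
    obtain ⟨a, ha⟩ := hrange.ge (T.range_tubeMap_subset_surgery (T.tube_mem hmem u))
    refine ⟨a, ha, ?_⟩
    rw [ha, tube, ← mul_assoc, pole_mul_pole, one_mul]
    exact ht.2

variable {S₁ S₂ Z : Type} [TopologicalSpace S₁] [TopologicalSpace S₂]
  [CompactSpace S₁] [CompactSpace S₂] [T2Space S₁] [T2Space S₂] [TopologicalSpace Z]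
  {j : Z → C(X, ℝ) × ℝ × ℂ} {i₁ : S₁ → X} {i₂ : S₂ → X} {k₁ : ℂ → S₁} {k₂ : ℂ → S₂}

theorem isConnectedSumOf [CompactSpace X] (hj : Topology.IsEmbedding j)
    (hrange : range j = T.surgery) (h₁ : (T.piece true).IsDiscComplement i₁ k₁)
    (h₂ : (T.piece false).IsDiscComplement i₂ k₂) : IsConnectedSumOf Z S₁ S₂ := by
  have hsub : ∀ {s}, s ⊆ T.surgery → Nonempty (j ⁻¹' s ≃ₜ s) := fun hs =>
    ⟨hj.homeomorphOfSubsetRange (hs.trans hrange.ge)⟩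
  have hclosed : ∀ b, IsClosed (j ⁻¹' T.half b) := fun b => by
    rw [preimage_half hrange]
    exact isClosed_le continuous_const (by have := hj.continuous; fun_prop)
  obtain ⟨e⟩ := T.nonempty_homeomorph_equator
  obtain ⟨e₁⟩ := nonempty_homeomorph_half h₁
  obtain ⟨e₂⟩ := nonempty_homeomorph_half h₂
  refine ⟨j ⁻¹' T.half true, j ⁻¹' T.half false, k₁ '' ball 0 1, k₂ '' ball 0 1,
    hclosed _, hclosed _, preimage_half_union hrange, ?_, ?_, ?_,
    h₁.isOpenEmbedding.isOpenMap _ isOpen_ball, h₂.isOpenEmbedding.isOpenMap _ isOpen_ball,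
    nonempty_homeomorph_ball h₁.isOpenEmbedding, nonempty_homeomorph_ball h₂.isOpenEmbedding,
    (hsub (sep_subset _ _)).map (·.trans e₁), (hsub (sep_subset _ _)).map (·.trans e₂)⟩
  · rw [← preimage_inter, half_inter, frontier_preimage_half hj hrange]
  · rw [frontier_preimage_half hj hrange, frontier_preimage_half hj hrange]
  · rw [← preimage_inter, half_inter]
    exact (hsub (sep_subset _ _)).map (·.trans e)

end ConnectedSum
end TubeSite

/-! ### Discs in surfaces, and the wedge sum -/

theorem exists_disc {S : Type*} [MetricSpace S] [ChartedSpace (EuclideanSpace ℝ (Fin 2)) S] (p : S)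
    {ε : ℝ} (hε : 0 < ε) :
    ∃ k : ℂ → S, Topology.IsOpenEmbedding k ∧ k 0 = p ∧ ∀ v, dist (k v) p ≤ ε := by
  set e := chartAt (EuclideanSpace ℝ (Fin 2)) p
  have hp : p ∈ e.source := mem_chart_source _ p
  have hnhds : e.target ∩ e.symm ⁻¹' ball p ε ∈ 𝓝 (e p) := by
    refine (e.isOpen_inter_preimage_symm isOpen_ball).mem_nhds ⟨e.map_source hp, ?_⟩
    rw [mem_preimage, e.left_inv hp]
    exact mem_ball_self hε
  obtain ⟨r, hr, hsub⟩ := Metric.mem_nhds_iff.1 hnhds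
  let f := (OpenPartialHomeomorph.univBall (e p) r).trans e.symm
  have hmem : ∀ v, OpenPartialHomeomorph.univBall (e p) r v ∈ ball (e p) r := fun v => by
    rw [← OpenPartialHomeomorph.univBall_target (e p) hr]
    exact OpenPartialHomeomorph.map_source _ (by simp)
  have hf : f.source = univ := by
    ext v
    simpa [f] using (hsub (hmem v)).1
  refine ⟨f ∘ planeHomeomorph,
    (f.isOpenEmbedding hf).comp planeHomeomorph.isOpenEmbedding, ?_, fun v => ?_⟩
  · have : planeHomeomorph 0 = 0 := map_zero Complex.orthonormalBasisOneI.repr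
    simp [f, this, e.left_inv hp]
  · exact (hsub (hmem _)).2.le

theorem range_smul_circle : range (fun u : Circle => (2 : ℝ) • (u : ℂ)) = sphere 0 2 := by
  ext v
  rw [mem_sphere_zero_iff_norm]
  constructor
  · rintro ⟨u, rfl⟩
    rw [norm_smul, Circle.norm_coe, mul_one, Real.norm_two]
  · intro hv
    exact ⟨Circle.exp v.arg, by simp [← hv]⟩

namespace BorderedPiece

variable {S X : Type*} [TopologicalSpace S] [CompactSpace S] [TopologicalSpace X] [T2Space X]
  {i : S → X} {k : ℂ → S}

theorem exists_isDiscComplement (hi : Continuous i) (hinj : Function.Injective i)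
    (hk : Topology.IsOpenEmbedding k) (hopen : ∀ O, IsOpen O → k 0 ∉ O → IsOpen (i '' O)) :
    ∃ P : BorderedPiece X, P.IsDiscComplement i k := by
  have hclosed : IsClosed (k '' ball 0 2)ᶜ := (hk.isOpenMap _ isOpen_ball).isClosed_compl
  refine ⟨{
    carrier := i '' (k '' ball 0 2)ᶜ
    rim := fun u => i (k ((2 : ℝ) • (u : ℂ)))
    isClosed := (hclosed.isCompact.image hi).isClosed
    continuous_rim := hi.comp (hk.continuous.comp (by fun_prop))
    injective_rim := fun u v h => ?_
    rim_mem := fun u => mem_image_of_mem i ?_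
    isOpen_diff := ?_ }, ⟨hi, hinj, hk, rfl, fun u => rfl⟩⟩
  · exact Circle.ext (smul_right_injective ℂ two_ne_zero (hk.injective (hinj h)))
  · rintro ⟨v, hv, hvk⟩
    have hv : v ∈ sphere (0 : ℂ) 2 := hk.injective hvk ▸ range_smul_circle.le (mem_range_self u)
    exact sphere_disjoint_ball.le_bot ⟨hv, ‹_›⟩
  · have hrim : range (fun u : Circle => i (k ((2 : ℝ) • (u : ℂ)))) = i '' (k '' sphere 0 2) := by
      rw [← range_smul_circle, ← range_comp, ← range_comp]
      rfl
    have := T2Space.of_injective_continuous hinj hi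
    rw [hrim, ← image_sdiff hinj, sdiff_eq, ← compl_union, ← image_union, ball_union_sphere]
    exact hopen _ ((isCompact_closedBall 0 2).image hk.continuous).isClosed.isOpen_compl
      fun h => h (mem_image_of_mem k (mem_closedBall_self zero_le_two))

end BorderedPiece

namespace BorderedPiece.IsDiscComplement

variable {S X : Type*} [MetricSpace S] [MetricSpace X] {P : BorderedPiece X} {i : S → X} {k : ℂ → S}
  {ε : ℝ}

theorem apply_zero_notMem (h : P.IsDiscComplement i k) : i (k 0) ∉ P.carrier := by
  rw [h.carrier_eq, h.injective.mem_set_image]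
  exact not_not.2 (mem_image_of_mem k (mem_ball_self two_pos))

theorem dist_rim_le (h : P.IsDiscComplement i k) (hi : Isometry i)
    (hε : ∀ v, dist (k v) (k 0) ≤ ε) (u : Circle) : dist (P.rim u) (i (k 0)) ≤ ε := by
  rw [h.rim_eq, hi.dist_eq]
  exact hε _

theorem exists_near (h : P.IsDiscComplement i k) (hi : Isometry i)
    (hε : ∀ v, dist (k v) (k 0) ≤ ε) (x : S) : ∃ y ∈ P.carrier, dist (i x) y ≤ 2 * ε := by
  by_cases hx : x ∈ k '' ball 0 2
  · obtain ⟨v, -, rfl⟩ := hx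
    refine ⟨P.rim 1, P.rim_mem 1, (dist_triangle_right _ _ (i (k 0))).trans ?_⟩
    rw [hi.dist_eq]
    linarith [hε v, h.dist_rim_le hi hε 1]
  · refine ⟨i x, h.carrier_eq ▸ mem_image_of_mem i hx, ?_⟩
    rw [dist_self]
    linarith [dist_nonneg.trans (hε 0)]

end BorderedPiece.IsDiscComplement

section Wedge

variable {S₁ S₂ X : Type*} [MetricSpace S₁] [MetricSpace S₂] [MetricSpace X]
  {p₁ : S₁} {p₂ : S₂} {i₁ : S₁ → X} {i₂ : S₂ → X} {ε : ℝ} {k₁ : ℂ → S₁} {k₂ : ℂ → S₂}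

theorem isOpen_image_wedge (h₁ : Isometry i₁) (hcover : range i₁ ∪ range i₂ = univ)
    (hcross : ∀ x y, dist (i₁ x) (i₂ y) = dist x p₁ + dist p₂ y) {O : Set S₁} (hO : IsOpen O)
    (hp : p₁ ∉ O) : IsOpen (i₁ '' O) := by
  rw [Metric.isOpen_iff]
  rintro _ ⟨x, hx, rfl⟩
  obtain ⟨δ, hδ, hsub⟩ := Metric.isOpen_iff.1 hO x hx
  have hxp : 0 < dist x p₁ := dist_pos.2 fun h => hp (h ▸ hx)
  refine ⟨min δ (dist x p₁), lt_min hδ hxp, fun y hy => ?_⟩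
  rw [mem_ball] at hy
  obtain ⟨y', rfl⟩ | ⟨y', rfl⟩ := (hcover.ge (mem_univ y) : y ∈ range i₁ ∪ range i₂)
  · rw [h₁.dist_eq] at hy
    exact ⟨y', hsub (hy.trans_le (min_le_left _ _)), rfl⟩
  · rw [dist_comm, hcross] at hy
    have := hy.trans_le (min_le_right _ _)
    linarith [dist_nonneg (x := p₂) (y := y')]

theorem exists_tubeSite (h₁ : Isometry i₁) (h₂ : Isometry i₂) (hwp : i₁ (k₁ 0) = i₂ (k₂ 0))
    (hcover : range i₁ ∪ range i₂ = univ) (hinter : range i₁ ∩ range i₂ = {i₁ (k₁ 0)})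
    {P₁ P₂ : BorderedPiece X} (hP₁ : P₁.IsDiscComplement i₁ k₁) (hP₂ : P₂.IsDiscComplement i₂ k₂)
    (hε : 0 < ε) (hε₁ : ∀ v, dist (k₁ v) (k₁ 0) ≤ ε) (hε₂ : ∀ v, dist (k₂ v) (k₂ 0) ≤ ε) :
    ∃ T : TubeSite X (2 * ε), T.piece true = P₁ ∧ T.piece false = P₂ := by
  have hdisj : ∀ x ∈ P₁.carrier, x ∉ P₂.carrier := by
    intro x hx₁ hx₂
    have hx : x ∈ range i₁ ∩ range i₂ :=
      ⟨image_subset_range _ _ (hP₁.carrier_eq ▸ hx₁), image_subset_range _ _ (hP₂.carrier_eq ▸ hx₂)⟩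
    rw [hinter, mem_singleton_iff] at hx
    exact hP₁.apply_zero_notMem (hx ▸ hx₁)
  let piece : Bool → BorderedPiece X := fun b => bif b then P₁ else P₂
  have hrim : ∀ b u, dist ((piece b).rim u) (i₁ (k₁ 0)) ≤ ε := by
    rintro (_ | _) u
    · exact hwp ▸ hP₂.dist_rim_le h₂ hε₂ u
    · exact hP₁.dist_rim_le h₁ hε₁ u
  refine ⟨⟨piece, by positivity, ?_, fun b b' u v => ?_, fun x => ?_⟩, rfl, rfl⟩
  · rintro (_ | _) (_ | _) x hx hx'
    exacts [rfl, absurd hx (hdisj x hx'), absurd hx' (hdisj x hx), rfl]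
  · linarith [dist_triangle_right ((piece b).rim u) ((piece b').rim v) (i₁ (k₁ 0)), hrim b u,
      hrim b' v]
  · obtain ⟨x, rfl⟩ | ⟨x, rfl⟩ := (hcover.ge (mem_univ x) : x ∈ range i₁ ∪ range i₂)
    · exact ⟨true, hP₁.exists_near h₁ hε₁ x⟩
    · exact ⟨false, hP₂.exists_near h₂ hε₂ x⟩

end Wedge

theorem exists_connectedSum_ghDist_le {S₁ S₂ X : Type} [MetricSpace S₁] [MetricSpace S₂]
    [CompactSpace S₁] [CompactSpace S₂] [ChartedSpace (EuclideanSpace ℝ (Fin 2)) S₁]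
    [ChartedSpace (EuclideanSpace ℝ (Fin 2)) S₂] (hS₁ : IsLengthSpace S₁) (hS₂ : IsLengthSpace S₂)
    {p₁ : S₁} {p₂ : S₂} [MetricSpace X] [Nonempty X] [CompactSpace X] {i₁ : S₁ → X} {i₂ : S₂ → X}
    (h₁ : Isometry i₁) (h₂ : Isometry i₂) (hwp : i₁ p₁ = i₂ p₂)
    (hcover : range i₁ ∪ range i₂ = univ) (hinter : range i₁ ∩ range i₂ = {i₁ p₁})
    (hcross : ∀ x y, dist (i₁ x) (i₂ y) = dist x p₁ + dist p₂ y) {ε : ℝ} (hε : 0 < ε) :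
    ∃ (Z : Type) (_ : MetricSpace Z) (_ : Nonempty Z) (_ : CompactSpace Z),
      IsLengthSpace Z ∧ IsConnectedSumOf Z S₁ S₂ ∧ ghDist X Z ≤ ε := by
  have hX := isLengthSpace_wedge hS₁ hS₂ h₁ h₂ hwp hcover hcross
  obtain ⟨k₁, hk₁, rfl, hε₁⟩ := exists_disc p₁ (ε := ε / 20) (by positivity)
  obtain ⟨k₂, hk₂, rfl, hε₂⟩ := exists_disc p₂ (ε := ε / 20) (by positivity)
  obtain ⟨P₁, hP₁⟩ := BorderedPiece.exists_isDiscComplement h₁.continuous h₁.injective hk₁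
    fun _ => isOpen_image_wedge h₁ hcover hcross
  obtain ⟨P₂, hP₂⟩ := BorderedPiece.exists_isDiscComplement h₂.continuous h₂.injective hk₂
    fun _ => isOpen_image_wedge h₂ ((union_comm _ _).trans hcover) fun x y => by
      rw [dist_comm, hcross, add_comm, dist_comm x, dist_comm y]
  obtain ⟨T, rfl, rfl⟩ :=
    exists_tubeSite h₁ h₂ hwp hcover hinter hP₁ hP₂ (by positivity) hε₁ hε₂
  obtain ⟨Z, _, _, _, j, hj, hrange, hZ, hdist⟩ := T.exists_isLengthSpace_surgery hX
  exact ⟨Z, _, ‹_›, ‹_›, hZ, TubeSite.isConnectedSumOf hj hrange hP₁ hP₂, by linarith⟩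

/-- A metric wedge sum of two closed length surfaces is the Gromov-Hausdorff limit of
a sequence of length spaces each homeomorphic to a connected sum of the surfaces.
The wedge sum `X` is described by isometric embeddings `i₁, i₂` covering `X`,
identifying the basepoints, with cross-distances going through the wedge point. -/
theorem metric_wedge_of_surfaces_ghLimit_of_connected_sums
    (S₁ S₂ : Type) [MetricSpace S₁] [MetricSpace S₂]
    [CompactSpace S₁] [CompactSpace S₂] [ConnectedSpace S₁] [ConnectedSpace S₂]
    [ChartedSpace (EuclideanSpace ℝ (Fin 2)) S₁] [ChartedSpace (EuclideanSpace ℝ (Fin 2)) S₂]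
    (hS₁ : IsLengthSpace S₁) (hS₂ : IsLengthSpace S₂) (p₁ : S₁) (p₂ : S₂)
    (X : Type) [MetricSpace X] [Nonempty X] [CompactSpace X]
    (i₁ : S₁ → X) (i₂ : S₂ → X) (h₁ : Isometry i₁) (h₂ : Isometry i₂)
    (hwp : i₁ p₁ = i₂ p₂) (hcover : Set.range i₁ ∪ Set.range i₂ = Set.univ)
    (hinter : Set.range i₁ ∩ Set.range i₂ = {i₁ p₁})
    (hcross : ∀ (x : S₁) (y : S₂), dist (i₁ x) (i₂ y) = dist x p₁ + dist p₂ y) :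
    ∃ F : ℕ → GHSpace,
      (∀ n, ∃ (Z : Type) (m : MetricSpace Z), letI := m;
        ∃ (_ : Nonempty Z) (_ : CompactSpace Z),
          IsLengthSpace Z ∧ IsConnectedSumOf Z S₁ S₂ ∧ toGHSpace Z = F n) ∧
      Tendsto F atTop (nhds (toGHSpace X)) := by
  choose Z m hne hc hlen hsum hdist using fun n : ℕ =>
    exists_connectedSum_ghDist_le hS₁ hS₂ h₁ h₂ hwp hcover hinter hcross
      (ε := 1 / (n + 1)) (by positivity)
  refine ⟨fun n => toGHSpace (Z n), fun n => ⟨Z n, m n, hne n, hc n, hlen n, hsum n, rfl⟩, ?_⟩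
  refine tendsto_iff_dist_tendsto_zero.2 (squeeze_zero (fun _ => dist_nonneg) (fun n => ?_)
    tendsto_one_div_add_atTop_nhds_zero_nat)
  exact (dist_comm _ _).trans_le (hdist n)
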